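/- For any real a > 1 and integer b ≥ 0, the sum Σ_{n > x} Λ(n)² n^{-a} (log(x/n))^b equals ((-1)^b b! · x^{1-a} · log x)/(a-1)^{b+1} · (1 + O(1/log x)) as x → ∞, where the implied constant depends only on a and b. -/

import Mathlib

open Real ArithmeticFunction Filter MeasureTheory

lemma norm_ofReal_cpow_neg_sub_le {n : ℝ} (hn : 0 < n) {s : ℂ} (hs : 0 ≤ s.re) {u v : ℝ}
    (hu : n ≤ u) (hv : n ≤ v) :
    ‖(v : ℂ) ^ (-s) - (u : ℂ) ^ (-s)‖ ≤ ‖s‖ * n ^ (-s.re - 1) * |v - u| := by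
  have hd : ∀ w ∈ Set.Ici n, HasDerivWithinAt (fun w : ℝ => (w : ℂ) ^ (-s))
      (-s * (w : ℂ) ^ (-s - 1)) (Set.Ici n) w := by
    intro w hw
    have hw0 : 0 < w := hn.trans_le hw
    have := (hasDerivAt_id (w : ℂ)).cpow_const (c := -s) (by left; simpa using hw0)
    simpa using this.comp_ofReal.hasDerivWithinAt
  have := (convex_Ici n).norm_image_sub_le_of_norm_hasDerivWithin_le hd
    (C := ‖s‖ * n ^ (-s.re - 1)) ?_ hu hv
  · simpa using this
  · intro w hw
    have hw0 : 0 < w := hn.trans_le hw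
    rw [norm_mul, norm_neg, Complex.norm_cpow_eq_rpow_re_of_pos hw0]
    simp only [Complex.sub_re, Complex.neg_re, Complex.one_re]
    exact mul_le_mul_of_nonneg_left (Real.rpow_le_rpow_of_nonpos hn hw (by linarith))
      (norm_nonneg s)

/-- The error of the right-endpoint rule for `∫ u in n..n+1, u ^ (-s)`, multiplied by `s - 1`. -/
noncomputable def zetaStep (n : ℕ) (s : ℂ) : ℂ :=
  (s - 1) * ((n : ℂ) + 1) ^ (-s) + ((n : ℂ) + 1) ^ (1 - s) - (n : ℂ) ^ (1 - s)

lemma norm_zetaStep_le {n : ℕ} (hn : 0 < n) {s : ℂ} (hs : 0 ≤ s.re) :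
    ‖zetaStep n s‖ ≤ ‖s - 1‖ * (‖s‖ * (n : ℝ) ^ (-s.re - 1)) := by
  have hn' : (0 : ℝ) < n := by exact_mod_cast hn
  have hd : ∀ w ∈ Set.Icc (n : ℝ) (n + 1), HasDerivWithinAt
      (fun w : ℝ => (s - 1) * (((n + 1 : ℝ) : ℂ)) ^ (-s) * (w : ℂ) + (w : ℂ) ^ (1 - s))
      ((s - 1) * ((((n + 1 : ℝ) : ℂ)) ^ (-s) - (w : ℂ) ^ (-s))) (Set.Icc (n : ℝ) (n + 1)) w := by
    intro w hw
    have hw0 : 0 < w := hn'.trans_le hw.1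
    have h1 := ((hasDerivAt_id (w : ℂ)).cpow_const (c := 1 - s) (by left; simpa using hw0))
    have h2 := ((hasDerivAt_id (w : ℂ)).const_mul ((s - 1) * (((n + 1 : ℝ) : ℂ)) ^ (-s))).add h1
    have h3 := h2.comp_ofReal.hasDerivWithinAt (s := Set.Icc (n : ℝ) (n + 1))
    convert! h3 using 1
    simp only [id, mul_one]
    rw [show 1 - s - 1 = -s by ring]
    ring
  have := (convex_Icc (n : ℝ) (n + 1)).norm_image_sub_le_of_norm_hasDerivWithin_le hd
    (C := ‖s - 1‖ * (‖s‖ * (n : ℝ) ^ (-s.re - 1))) ?_ (x := (n : ℝ)) (y := (n : ℝ) + 1) (by simp) (by simp)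
  · rw [add_sub_cancel_left, norm_one, mul_one] at this
    convert! this using 2
    unfold zetaStep; push_cast; ring
  · intro w hw
    rw [norm_mul]
    gcongr
    refine (norm_ofReal_cpow_neg_sub_le hn' hs hw.1 (by simp)).trans ?_
    have : |((n : ℝ) + 1) - w| ≤ 1 := by rw [abs_le]; constructor <;> linarith [hw.1, hw.2]
    exact mul_le_of_le_one_right (by positivity) this

lemma differentiable_zetaStep {n : ℕ} (hn : 0 < n) : Differentiable ℂ (zetaStep n) := by
  have h1 : (n : ℂ) ≠ 0 := by exact_mod_cast hn.ne'
  have h2 : (n : ℂ) + 1 ≠ 0 := by exact_mod_cast n.succ_ne_zero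
  unfold zetaStep
  intro s
  refine ((DifferentiableAt.mul (by fun_prop) ?_).add ?_).sub ?_
  · exact DifferentiableAt.const_cpow (by fun_prop) (Or.inl h2)
  · exact DifferentiableAt.const_cpow (by fun_prop) (Or.inl h2)
  · exact DifferentiableAt.const_cpow (by fun_prop) (Or.inl h1)

lemma sum_range_zetaStep (N M : ℕ) (s : ℂ) :
    ∑ n ∈ Finset.range M, zetaStep (n + N) s =
      (s - 1) * ∑ n ∈ Finset.range (M + N), ((n : ℂ) + 1) ^ (-s) + ((M + N : ℕ) : ℂ) ^ (1 - s)
      - ((s - 1) * ∑ n ∈ Finset.range N, ((n : ℂ) + 1) ^ (-s) + (N : ℂ) ^ (1 - s)) := by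
  induction M with
  | zero => simp
  | succ M ih =>
    rw [Finset.sum_range_succ, ih, show M + 1 + N = (M + N) + 1 by ring, Finset.sum_range_succ]
    unfold zetaStep
    push_cast
    ring

lemma summable_zetaStep_bound {N : ℕ} {σ : ℝ} (hσ : 0 < σ) :
    Summable (fun n : ℕ => ((n + N : ℕ) : ℝ) ^ (-σ - 1)) :=
  (summable_nat_add_iff N).mpr (Real.summable_nat_rpow.mpr (by linarith))

lemma riemannZeta₁_eq_of_one_lt_re {N : ℕ} (hN : 0 < N) {s : ℂ} (hs : 1 < s.re) :
    riemannZeta₁ s = (s - 1) * ∑ n ∈ Finset.range N, ((n : ℂ) + 1) ^ (-s) + (N : ℂ) ^ (1 - s)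
      + ∑' n, zetaStep (n + N) s := by
  have hs1 : s ≠ 1 := by rintro rfl; simp at hs
  have hz : riemannZeta₁ s = (s - 1) * riemannZeta s := by
    rw [riemannZeta_eq_inv_sub_mul hs1, mul_inv_cancel_left₀ (sub_ne_zero.mpr hs1)]
  have hsum : Summable fun n => zetaStep (n + N) s := by
    refine Summable.of_norm_bounded
      (((summable_zetaStep_bound (N := N) (σ := s.re) (by linarith)).mul_left ‖s‖).mul_left
        ‖s - 1‖) fun n => norm_zetaStep_le (by lia) (by linarith)
  have hζ : HasSum (fun n : ℕ => ((n : ℂ) + 1) ^ (-s)) (riemannZeta s) := by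
    have h := zeta_eq_tsum_one_div_nat_add_one_cpow hs
    have h' : Summable fun n : ℕ => 1 / ((n : ℂ) + 1) ^ s := by
      have := (summable_nat_add_iff 1).mpr (Complex.summable_one_div_nat_cpow.mpr hs)
      simpa using this
    rw [h]
    convert! h'.hasSum using 2
    rw [Complex.cpow_neg, one_div]
  have hp : Tendsto (fun M : ℕ => ((M + N : ℕ) : ℂ) ^ (1 - s)) atTop (nhds 0) := by
    rw [tendsto_zero_iff_norm_tendsto_zero]
    have h0 : Tendsto (fun M : ℕ => ((M + N : ℕ) : ℝ) ^ (-(s.re - 1))) atTop (nhds 0) :=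
      (tendsto_rpow_neg_atTop (by linarith)).comp
        (tendsto_natCast_atTop_atTop.comp (tendsto_add_atTop_nat N))
    refine h0.congr fun M => ?_
    rw [Complex.norm_natCast_cpow_of_pos (by lia)]
    simp
  have hT := ((((hζ.tendsto_sum_nat.comp (tendsto_add_atTop_nat N)).const_mul (s - 1)).add
    hp).sub_const
      ((s - 1) * ∑ n ∈ Finset.range N, ((n : ℂ) + 1) ^ (-s) + (N : ℂ) ^ (1 - s)))
  have hU := hsum.hasSum.tendsto_sum_nat
  simp_rw [sum_range_zetaStep] at hU
  have := tendsto_nhds_unique hU hT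
  rw [this, hz]
  ring

lemma riemannZeta₁_eq {N : ℕ} (hN : 0 < N) {s : ℂ} (hs : 0 < s.re) :
    riemannZeta₁ s = (s - 1) * ∑ n ∈ Finset.range N, ((n : ℂ) + 1) ^ (-s) + (N : ℂ) ^ (1 - s)
      + ∑' n, zetaStep (n + N) s := by
  have hopen : IsOpen {s : ℂ | 0 < s.re} := isOpen_lt continuous_const Complex.continuous_re
  have htsum : DifferentiableOn ℂ (fun s => ∑' n, zetaStep (n + N) s) {s : ℂ | 0 < s.re} := by
    intro z hz
    refine DifferentiableAt.differentiableWithinAt ?_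
    set V : Set ℂ := {w : ℂ | z.re / 2 < w.re} ∩ Metric.ball 0 (‖z‖ + 1) with hV
    have hVo : IsOpen V := (isOpen_lt continuous_const Complex.continuous_re).inter
      Metric.isOpen_ball
    have hz0 : 0 < z.re := hz
    have hzV : z ∈ V := by constructor <;> simp; exact hz0
    refine (Complex.differentiableOn_tsum_of_summable_norm
      (u := fun n : ℕ => (‖z‖ + 1 + 1) * ((‖z‖ + 1) * ((n + N : ℕ) : ℝ) ^ (-(z.re / 2) - 1)))
      (((summable_zetaStep_bound (by linarith)).mul_left _).mul_left _)
      (fun n => (differentiable_zetaStep (by lia)).differentiableOn) hVo ?_).differentiableAt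
      (hVo.mem_nhds hzV)
    intro n w hw
    have hw2 : ‖w‖ < ‖z‖ + 1 := by simpa using hw.2
    have hw1 : z.re / 2 < w.re := hw.1
    refine (norm_zetaStep_le (by lia) (by linarith)).trans ?_
    gcongr
    · refine (norm_sub_le _ _).trans ?_
      rw [norm_one]; linarith
    · exact_mod_cast (by lia : 1 ≤ n + N)
  have hfin : Differentiable ℂ fun s : ℂ =>
      (s - 1) * ∑ n ∈ Finset.range N, ((n : ℂ) + 1) ^ (-s) + (N : ℂ) ^ (1 - s) := by
    intro s
    refine DifferentiableAt.add (DifferentiableAt.mul (by fun_prop) ?_) ?_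
    · refine DifferentiableAt.fun_sum fun n _ => ?_
      exact DifferentiableAt.const_cpow (by fun_prop) (Or.inl (by exact_mod_cast n.succ_ne_zero))
    · exact DifferentiableAt.const_cpow (by fun_prop) (Or.inl (by exact_mod_cast hN.ne'))
  have hpc : IsPreconnected {s : ℂ | 0 < s.re} := (convex_halfSpace_re_gt 0).isPreconnected
  have h2 : (2 : ℂ) ∈ {s : ℂ | 0 < s.re} := by simp
  refine AnalyticOnNhd.eqOn_of_preconnected_of_eventuallyEq
    (differentiable_riemannZeta₁.differentiableOn.analyticOnNhd hopen)
    ((hfin.differentiableOn.add htsum).analyticOnNhd hopen) hpc h2 ?_ hs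
  filter_upwards [(isOpen_lt continuous_const Complex.continuous_re).mem_nhds
    (show (2 : ℂ) ∈ {s : ℂ | 1 < s.re} by simp)] with w hw
  exact riemannZeta₁_eq_of_one_lt_re hN hw

lemma exists_norm_riemannZeta_le : ∃ K : ℝ, 1 ≤ K ∧ ∀ s : ℂ, 119 / 120 ≤ s.re → s.re ≤ 3 →
    1 / 2 ≤ |s.im| → ‖riemannZeta s‖ ≤ K * |s.im| ^ (1 / 30 : ℝ) := by
  set c₁ : ℝ := ∑' n : ℕ, ((n + 1 : ℕ) : ℝ) ^ (-(121 / 120) : ℝ) with hc₁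
  set c₂ : ℝ := ∑' n : ℕ, ((n + 1 : ℕ) : ℝ) ^ (-(7 / 5) : ℝ) with hc₂
  have hs₁ : Summable fun n : ℕ => ((n + 1 : ℕ) : ℝ) ^ (-(121 / 120) : ℝ) :=
    (summable_nat_add_iff 1).mpr (Real.summable_nat_rpow.mpr (by norm_num))
  have hs₂ : Summable fun n : ℕ => ((n + 1 : ℕ) : ℝ) ^ (-(7 / 5) : ℝ) :=
    (summable_nat_add_iff 1).mpr (Real.summable_nat_rpow.mpr (by norm_num))
  have hc₁0 : 0 ≤ c₁ := tsum_nonneg fun n => by positivity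
  have hc₂0 : 0 ≤ c₂ := tsum_nonneg fun n => by positivity
  refine ⟨5 * (c₁ + 2 + 7 * c₂), by linarith, fun s hs1 hs3 hst => ?_⟩
  set t : ℝ := |s.im| with ht
  have ht0 : 0 < t := by linarith
  set N : ℕ := ⌈t ^ 2⌉₊ with hN
  have hN0 : 0 < N := Nat.ceil_pos.mpr (by positivity)
  have hNl : t ^ 2 ≤ N := Nat.le_ceil _
  have hNu : (N : ℝ) ≤ 5 * t ^ 2 := by
    have := (Nat.ceil_lt_add_one (by positivity : 0 ≤ t ^ 2)).le
    nlinarith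
  have hN1 : (1 : ℝ) ≤ N := by exact_mod_cast hN0
  have hNp : (N : ℝ) ^ (1 / 60 : ℝ) ≤ 5 * t ^ (1 / 30 : ℝ) := by
    calc (N : ℝ) ^ (1 / 60 : ℝ) ≤ (5 * t ^ 2) ^ (1 / 60 : ℝ) := by gcongr
      _ = 5 ^ (1 / 60 : ℝ) * t ^ (1 / 30 : ℝ) := by
        rw [Real.mul_rpow (by norm_num) (by positivity), ← Real.rpow_natCast t 2,
          ← Real.rpow_mul ht0.le]
        norm_num
      _ ≤ 5 * t ^ (1 / 30 : ℝ) := by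
        gcongr
        calc (5 : ℝ) ^ (1 / 60 : ℝ) ≤ 5 ^ (1 : ℝ) :=
              Real.rpow_le_rpow_of_exponent_le (by norm_num) (by norm_num)
          _ = 5 := by simp
  have hNp1 : 1 ≤ (N : ℝ) ^ (1 / 60 : ℝ) := Real.one_le_rpow hN1 (by norm_num)
  have hts : t ≤ ‖s - 1‖ := by
    have := Complex.abs_im_le_norm (s - 1)
    simpa using this
  have hs1' : 0 < ‖s - 1‖ := ht0.trans_le hts
  have hsne : s ≠ 1 := by rintro rfl; simp at hs1'
  have hsn : ‖s‖ ≤ 3 + t := by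
    refine (Complex.norm_le_abs_re_add_abs_im s).trans ?_
    rw [abs_of_nonneg (by linarith)]
    linarith
  have hA : ‖∑ n ∈ Finset.range N, ((n : ℂ) + 1) ^ (-s)‖ ≤ c₁ * (N : ℝ) ^ (1 / 60 : ℝ) := by
    calc _ ≤ ∑ n ∈ Finset.range N, ‖((n : ℂ) + 1) ^ (-s)‖ := norm_sum_le _ _
      _ ≤ ∑ n ∈ Finset.range N, ((n + 1 : ℕ) : ℝ) ^ (-(121 / 120) : ℝ) * (N : ℝ) ^ (1 / 60 : ℝ) := by
        refine Finset.sum_le_sum fun n hn => ?_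
        have hn1 : (1 : ℝ) ≤ ((n + 1 : ℕ) : ℝ) := by simp
        have hnN : ((n + 1 : ℕ) : ℝ) ≤ N := by
          exact_mod_cast (Finset.mem_range.mp hn)
        have : ((n : ℂ) + 1) = ((n + 1 : ℕ) : ℂ) := by push_cast; rfl
        rw [this, Complex.norm_natCast_cpow_of_pos (by lia)]
        calc ((n + 1 : ℕ) : ℝ) ^ (-s).re ≤ ((n + 1 : ℕ) : ℝ) ^ (-(121 / 120) + 1 / 60 : ℝ) :=
              Real.rpow_le_rpow_of_exponent_le hn1 (by rw [Complex.neg_re]; linarith)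
          _ = ((n + 1 : ℕ) : ℝ) ^ (-(121 / 120) : ℝ) * ((n + 1 : ℕ) : ℝ) ^ (1 / 60 : ℝ) :=
              Real.rpow_add (by linarith) _ _
          _ ≤ _ := by gcongr
      _ ≤ c₁ * (N : ℝ) ^ (1 / 60 : ℝ) := by
        rw [← Finset.sum_mul]
        gcongr
        exact hs₁.sum_le_tsum _ fun n _ => by positivity
  have hB : ‖(N : ℂ) ^ (1 - s)‖ ≤ ‖s - 1‖ * (2 * (N : ℝ) ^ (1 / 60 : ℝ)) := by
    rw [Complex.norm_natCast_cpow_of_pos hN0]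
    have : (N : ℝ) ^ (1 - s).re ≤ (N : ℝ) ^ (1 / 60 : ℝ) :=
      Real.rpow_le_rpow_of_exponent_le hN1 (by rw [Complex.sub_re, Complex.one_re]; linarith)
    nlinarith
  have hC : ‖∑' n, zetaStep (n + N) s‖ ≤ ‖s - 1‖ * (7 * c₂ * (N : ℝ) ^ (1 / 60 : ℝ)) := by
    have hb : ∀ n : ℕ, ‖zetaStep (n + N) s‖ ≤
        ‖s - 1‖ * (7 * (((n + 1 : ℕ) : ℝ) ^ (-(7 / 5) : ℝ))) := by
      intro n
      refine (norm_zetaStep_le (by lia) (by linarith)).trans ?_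
      refine mul_le_mul_of_nonneg_left ?_ (norm_nonneg _)
      have hnN : (N : ℝ) ≤ ((n + N : ℕ) : ℝ) := by push_cast; linarith [n.cast_nonneg (α := ℝ)]
      have hn1 : ((n + 1 : ℕ) : ℝ) ≤ ((n + N : ℕ) : ℝ) := by push_cast; linarith
      have hn0 : (0 : ℝ) < ((n + 1 : ℕ) : ℝ) := by positivity
      have h1 : ((n + N : ℕ) : ℝ) ^ (-s.re - 1) ≤ t⁻¹ * ((n + 1 : ℕ) : ℝ) ^ (-(7 / 5) : ℝ) := by
        calc ((n + N : ℕ) : ℝ) ^ (-s.re - 1) ≤ ((n + N : ℕ) : ℝ) ^ (-(1 / 2) + -(7 / 5) : ℝ) :=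
              Real.rpow_le_rpow_of_exponent_le (by linarith) (by linarith)
          _ = ((n + N : ℕ) : ℝ) ^ (-(1 / 2) : ℝ) * ((n + N : ℕ) : ℝ) ^ (-(7 / 5) : ℝ) :=
              Real.rpow_add (by linarith) _ _
          _ ≤ (t ^ 2) ^ (-(1 / 2) : ℝ) * ((n + 1 : ℕ) : ℝ) ^ (-(7 / 5) : ℝ) := by
              refine mul_le_mul ?_ ?_ (by positivity) (by positivity)
              · exact Real.rpow_le_rpow_of_nonpos (by positivity) (hNl.trans hnN) (by norm_num)
              · exact Real.rpow_le_rpow_of_nonpos hn0 hn1 (by norm_num)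
          _ = t⁻¹ * ((n + 1 : ℕ) : ℝ) ^ (-(7 / 5) : ℝ) := by
              rw [← Real.rpow_natCast t 2, ← Real.rpow_mul ht0.le]
              norm_num [Real.rpow_neg_one]
      calc ‖s‖ * ((n + N : ℕ) : ℝ) ^ (-s.re - 1)
          ≤ (7 * t) * (t⁻¹ * ((n + 1 : ℕ) : ℝ) ^ (-(7 / 5) : ℝ)) := by
            refine mul_le_mul (by linarith) h1 (by positivity) (by positivity)
        _ = _ := by field_simp
    have h := tsum_of_norm_bounded ((hs₂.hasSum.mul_left 7).mul_left ‖s - 1‖) hb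
    refine h.trans ?_
    gcongr ‖s - 1‖ * ?_
    exact le_mul_of_one_le_right (by positivity) hNp1
  have hz : ‖s - 1‖ * ‖riemannZeta s‖ ≤ ‖s - 1‖ * ((c₁ + 2 + 7 * c₂) * (N : ℝ) ^ (1 / 60 : ℝ)) := by
    rw [← norm_mul, riemannZeta_eq_inv_sub_mul hsne, mul_inv_cancel_left₀ (sub_ne_zero.mpr hsne),
      riemannZeta₁_eq hN0 (by linarith)]
    refine (norm_add₃_le).trans ?_
    rw [norm_mul]
    have := mul_le_mul_of_nonneg_left hA hs1'.le
    linarith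
  have := le_of_mul_le_mul_left hz hs1'
  refine this.trans ?_
  have : 0 ≤ c₁ + 2 + 7 * c₂ := by positivity
  nlinarith

lemma exists_norm_iteratedDeriv_riemannZeta_le : ∃ K : ℝ, 1 ≤ K ∧ ∀ s : ℂ, 1 ≤ s.re → s.re ≤ 2 →
    1 ≤ |s.im| → ∀ j ≤ 3, ‖iteratedDeriv j riemannZeta s‖ ≤ K * |s.im| ^ (1 / 30 : ℝ) := by
  obtain ⟨K, hK1, hK⟩ := exists_norm_riemannZeta_le
  refine ⟨6 * (K * 2) * 120 ^ 3, by linarith, fun s h1 h2 ht j hj => ?_⟩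
  have hw : ∀ z ∈ Metric.closedBall s (1 / 120), 119 / 120 ≤ z.re ∧ z.re ≤ 3 ∧ 1 / 2 ≤ |z.im| ∧
      |z.im| ≤ 2 * |s.im| := by
    intro z hz
    have hd : ‖z - s‖ ≤ 1 / 120 := by simpa [dist_eq_norm] using hz
    have hre := abs_le.mp ((Complex.abs_re_le_norm (z - s)).trans hd)
    have him := (Complex.abs_im_le_norm (z - s)).trans hd
    rw [Complex.sub_re] at hre
    rw [Complex.sub_im] at him
    have h3 := abs_sub_abs_le_abs_sub z.im s.im
    have h4 := abs_sub_abs_le_abs_sub s.im z.im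
    rw [abs_sub_comm] at h4
    refine ⟨by linarith, by linarith, by linarith, by linarith⟩
  have hX : 0 < |s.im| ^ (1 / 30 : ℝ) := by positivity
  have hd : DiffContOnCl ℂ riemannZeta (Metric.ball s (1 / 120)) := by
    refine DifferentiableOn.diffContOnCl fun z hz => ?_
    have hz' := hw z (Metric.closure_ball_subset_closedBall hz)
    refine (differentiableAt_riemannZeta ?_).differentiableWithinAt
    rintro rfl
    norm_num at hz'
  have hb : ∀ z ∈ Metric.sphere s (1 / 120), ‖riemannZeta z‖ ≤
      K * 2 * |s.im| ^ (1 / 30 : ℝ) := by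
    intro z hz
    obtain ⟨ha, hb, hc, hd⟩ := hw z (Metric.sphere_subset_closedBall hz)
    refine (hK z ha hb hc).trans ?_
    rw [mul_assoc]
    gcongr
    calc |z.im| ^ (1 / 30 : ℝ) ≤ (2 * |s.im|) ^ (1 / 30 : ℝ) := by gcongr
      _ = 2 ^ (1 / 30 : ℝ) * |s.im| ^ (1 / 30 : ℝ) := Real.mul_rpow (by norm_num) (by positivity)
      _ ≤ 2 * |s.im| ^ (1 / 30 : ℝ) := by
        gcongr
        calc (2 : ℝ) ^ (1 / 30 : ℝ) ≤ 2 ^ (1 : ℝ) :=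
              Real.rpow_le_rpow_of_exponent_le (by norm_num) (by norm_num)
          _ = 2 := by simp
  refine (Complex.norm_iteratedDeriv_le_of_forall_mem_sphere_norm_le j (by norm_num) hd hb).trans ?_
  have hf : (j.factorial : ℝ) ≤ 6 := by
    exact_mod_cast (Nat.factorial_le hj : j.factorial ≤ 6)
  have hp : (120 : ℝ) ^ j ≤ 120 ^ 3 := pow_le_pow_right₀ (by norm_num) hj
  rw [div_eq_mul_inv, ← inv_pow, show ((1 : ℝ) / 120)⁻¹ = 120 by norm_num]
  calc (j.factorial : ℝ) * (K * 2 * |s.im| ^ (1 / 30 : ℝ)) * 120 ^ j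
      ≤ 6 * (K * 2 * |s.im| ^ (1 / 30 : ℝ)) * 120 ^ 3 := by gcongr
    _ = _ := by ring

lemma one_le_norm_riemannZeta_product {δ : ℝ} (hδ : 0 < δ) (t : ℝ) :
    1 ≤ ‖riemannZeta (1 + δ)‖ ^ 3 * ‖riemannZeta (1 + δ + Complex.I * t)‖ ^ 4 *
      ‖riemannZeta (1 + δ + 2 * Complex.I * t)‖ := by
  have := DirichletCharacter.norm_LSeries_product_ge_one (1 : DirichletCharacter ℂ 1) hδ t
  rw [one_pow, DirichletCharacter.modOne_eq_one] at this
  rwa [LSeries_one_eq_riemannZeta (by simpa), LSeries_one_eq_riemannZeta (by simpa),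
    LSeries_one_eq_riemannZeta (by simpa), norm_mul, norm_mul, norm_pow, norm_pow] at this

lemma exists_norm_riemannZeta_le_div : ∃ K : ℝ, 1 ≤ K ∧ ∀ δ : ℝ, 0 < δ → δ ≤ 1 →
    ‖riemannZeta (1 + δ)‖ ≤ K / δ := by
  have hc : ContinuousOn (fun δ : ℝ => ‖riemannZeta₁ (1 + δ)‖) (Set.Icc 0 1) := by
    have := differentiable_riemannZeta₁.continuous
    fun_prop
  obtain ⟨K, hK⟩ := isCompact_Icc.bddAbove_image hc
  refine ⟨max K 1, le_max_right _ _, fun δ h0 h1 => ?_⟩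
  have hne : (1 + δ : ℂ) ≠ 1 := by simpa using h0.ne'
  rw [riemannZeta_eq_inv_sub_mul hne, norm_mul, norm_inv, add_sub_cancel_left, Complex.norm_real,
    Real.norm_of_nonneg h0.le, inv_mul_eq_div]
  gcongr
  exact (hK ⟨δ, ⟨h0.le, h1⟩, rfl⟩).trans (le_max_left _ _)

lemma exists_le_norm_riemannZeta : ∃ K : ℝ, 1 ≤ K ∧ ∀ s : ℂ, 1 < s.re → s.re ≤ 2 →
    1 ≤ |s.im| → ‖riemannZeta s‖⁻¹ ≤ K * (|s.im| ^ (1 / 30 : ℝ)) ^ 4 := by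
  obtain ⟨K₁, hK₁, hd⟩ := exists_norm_iteratedDeriv_riemannZeta_le
  obtain ⟨K₂, hK₂, hr⟩ := exists_norm_riemannZeta_le_div
  set K := max K₁ K₂ with hKdef
  have hK : 1 ≤ K := hK₁.trans (le_max_left _ _)
  refine ⟨32 * K ^ 7, by nlinarith [one_le_pow₀ hK (n := 7)], fun s h1 h2 ht => ?_⟩
  set t := s.im with htdef
  set X : ℝ := |t| ^ (1 / 30 : ℝ) with hXdef
  have hX : 1 ≤ X := Real.one_le_rpow ht (by norm_num)
  have hX0 : 0 < X := by linarith
  have hK0 : 0 < K := by linarith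
  have h2t : |2 * t| ^ (1 / 30 : ℝ) ≤ 2 * X := by
    rw [abs_mul, abs_two, Real.mul_rpow (by norm_num) (by positivity)]
    gcongr
    calc (2 : ℝ) ^ (1 / 30 : ℝ) ≤ 2 ^ (1 : ℝ) :=
          Real.rpow_le_rpow_of_exponent_le (by norm_num) (by norm_num)
      _ = 2 := by simp
  set η : ℝ := 1 / (32 * K ^ 8 * X ^ 5) with hη
  have hη0 : 0 < η := by positivity
  have hη1 : η ≤ 1 := by
    rw [hη, div_le_one (by positivity)]
    nlinarith [one_le_pow₀ hK (n := 8), one_le_pow₀ hX (n := 5),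
      one_le_mul_of_one_le_of_one_le (one_le_pow₀ hK (n := 8)) (one_le_pow₀ hX (n := 5))]
  have key : ∀ δ : ℝ, η ≤ δ → δ ≤ 1 →
      1 / (16 * K ^ 7 * X ^ 4) ≤ ‖riemannZeta (1 + δ + Complex.I * t)‖ := by
    intro δ hδ hδ1
    have hδ0 : 0 < δ := hη0.trans_le hδ
    have h := one_le_norm_riemannZeta_product hδ0 t
    have ha : ‖riemannZeta (1 + δ)‖ ≤ K / δ := (hr δ hδ0 hδ1).trans (by
      gcongr; exact le_max_right _ _)
    have hb : ‖riemannZeta (1 + δ + 2 * Complex.I * t)‖ ≤ K * (2 * X) := by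
      have := hd (1 + δ + 2 * Complex.I * t) (by simpa using hδ0.le) (by simp; linarith)
        (by simp [abs_mul]; linarith) 0 (by norm_num)
      rw [iteratedDeriv_zero] at this
      refine this.trans ?_
      have hi : (1 + δ + 2 * Complex.I * t : ℂ).im = 2 * t := by simp
      rw [hi]
      gcongr
      exact le_max_left _ _
    set z := ‖riemannZeta (1 + δ + Complex.I * t)‖ with hz
    have hz0 : 0 ≤ z := norm_nonneg _
    refine le_of_pow_le_pow_left₀ (n := 4) (by norm_num) hz0 ?_
    have h' : 1 ≤ (K / δ) ^ 3 * z ^ 4 * (K * (2 * X)) := h.trans (by gcongr)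
    have h'' : (K / δ) ^ 3 * z ^ 4 * (K * (2 * X)) ≤
        (K / η) ^ 3 * z ^ 4 * (K * (2 * X)) := by gcongr
    have h3 := h'.trans h''
    rw [hη] at h3
    rw [div_pow, one_pow, div_le_iff₀ (by positivity)]
    refine h3.trans (le_of_eq ?_)
    field_simp
    ring
  have hlow : 1 / (32 * K ^ 7 * X ^ 4) ≤ ‖riemannZeta s‖ := by
    have hs : s = 1 + ((s.re - 1 : ℝ) : ℂ) + Complex.I * t := by
      apply Complex.ext <;> simp [htdef]
    rcases le_total η (s.re - 1) with h | h
    · have := key _ h (by linarith)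
      rw [← hs] at this
      refine le_trans ?_ this
      gcongr
      norm_num
    · have hk := key η le_rfl hη1
      set w : ℂ := 1 + (η : ℂ) + Complex.I * t with hw
      have hconv : Convex ℝ (Set.Icc (1 : ℝ) 2 ×ℂ {t}) :=
        ((convex_Icc (1 : ℝ) 2).linear_preimage Complex.reLm).inter
          ((convex_singleton t).linear_preimage Complex.imLm)
      have hm := hconv.norm_image_sub_le_of_norm_hasDerivWithin_le (𝕜 := ℂ) (f := riemannZeta)
        (f' := deriv riemannZeta) (C := K * X) (x := s) (y := w) ?_ ?_ ?_ ?_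
      · have hws : ‖w - s‖ ≤ η := by
          have : w - s = ((η - (s.re - 1) : ℝ) : ℂ) := by
            rw [hw]; nth_rw 1 [hs]; push_cast; ring
          rw [this, Complex.norm_real, Real.norm_of_nonneg (by linarith)]
          linarith
        have h5 : ‖riemannZeta w‖ - ‖riemannZeta s‖ ≤ K * X * η :=
          (norm_sub_norm_le _ _).trans (hm.trans (by gcongr))
        have h6 : K * X * η = 1 / (32 * K ^ 7 * X ^ 4) := by
          rw [hη]; field_simp
        have h7 : 1 / (16 * K ^ 7 * X ^ 4) = 2 * (1 / (32 * K ^ 7 * X ^ 4)) := by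
          field_simp; norm_num
        linarith
      · intro z hz
        refine (differentiableAt_riemannZeta ?_).hasDerivAt.hasDerivWithinAt
        rintro rfl
        have : (1 : ℂ).im = t := hz.2
        rw [← this] at ht
        norm_num at ht
      · intro z hz
        have hzi : z.im = t := hz.2
        have := hd z hz.1.1 hz.1.2 (by rw [hzi]; exact ht) 1 (by norm_num)
        rw [iteratedDeriv_one, hzi] at this
        refine this.trans ?_
        gcongr
        exact le_max_left _ _
      · exact ⟨⟨h1.le, h2⟩, rfl⟩
      · refine ⟨⟨?_, ?_⟩, ?_⟩ <;> simp [hw]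
        · exact hη0.le
        · linarith
  have := inv_anti₀ (by positivity) hlow
  rwa [one_div, inv_inv] at this

lemma AnalyticAt.iteratedDeriv_of_complex {f : ℂ → ℂ} {s : ℂ} (hf : AnalyticAt ℂ f s) (n : ℕ) :
    AnalyticAt ℂ (iteratedDeriv n f) s := by
  rw [iteratedDeriv_eq_iterate]
  exact hf.iterated_deriv n

lemma iteratedDeriv_two_neg_logDeriv_sub_self {f : ℂ → ℂ} {s : ℂ} (hf : AnalyticAt ℂ f s)
    (h0 : f s ≠ 0) :
    iteratedDeriv 2 (fun z => -deriv f z / f z - f z) s =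
      -(iteratedDeriv 3 f s * f s ^ 2 - 3 * iteratedDeriv 1 f s * iteratedDeriv 2 f s * f s +
        2 * iteratedDeriv 1 f s ^ 3) / f s ^ 3 - iteratedDeriv 2 f s := by
  have hd (j : ℕ) {z : ℂ} (hz : AnalyticAt ℂ f z) :
      HasDerivAt (iteratedDeriv j f) (iteratedDeriv (j + 1) f z) z := by
    rw [iteratedDeriv_succ]
    exact (hz.iteratedDeriv_of_complex j).differentiableAt.hasDerivAt
  have h1 : ∀ᶠ z in nhds s, deriv (fun z => -deriv f z / f z - f z) z =
      -(iteratedDeriv 2 f z * iteratedDeriv 0 f z - iteratedDeriv 1 f z ^ 2) /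
        iteratedDeriv 0 f z ^ 2 - iteratedDeriv 1 f z := by
    filter_upwards [hf.eventually_analyticAt, hf.continuousAt.eventually_ne h0] with z hz hz0
    have e0 := hd 0 hz
    have e1 := hd 1 hz
    rw [iteratedDeriv_zero] at e0
    rw [iteratedDeriv_one] at e1
    have := ((e1.neg.div e0 hz0).sub e0).deriv
    convert! this using 1
    simp only [iteratedDeriv_zero, iteratedDeriv_one, Pi.neg_apply]
    norm_num [iteratedDeriv_one]
    ring
  rw [iteratedDeriv_succ, iteratedDeriv_one, Filter.EventuallyEq.deriv_eq h1]
  have h0' : iteratedDeriv 0 f s ≠ 0 := by simpa using h0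
  have e0 := hd 0 hf
  have := (((((hd 2 hf).mul e0).sub ((hd 1 hf).pow 2)).neg.div (e0.pow 2)
    (pow_ne_zero 2 h0')).sub (hd 1 hf)).deriv
  refine Eq.trans ?_ (this.trans ?_)
  · rfl
  · simp only [Pi.neg_apply, Pi.sub_apply, Pi.mul_apply, Pi.pow_apply, iteratedDeriv_zero]
    norm_num
    field_simp
    ring

/-- The difference between the negative logarithmic derivative of zeta and zeta itself, regular at `1`. -/
noncomputable def zetaReg (s : ℂ) : ℂ :=
  -deriv riemannZeta₁ s / riemannZeta₁ s - riemannZeta₀ s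

lemma riemannZeta₁_ne_zero_of_one_le_re {s : ℂ} (hs : 1 ≤ s.re) : riemannZeta₁ s ≠ 0 := by
  rcases eq_or_ne s 1 with rfl | h1
  · simp
  · have h := riemannZeta_ne_zero_of_one_le_re hs
    rw [riemannZeta_eq_inv_sub_mul h1] at h
    exact right_ne_zero_of_mul h

lemma zetaReg_eq {s : ℂ} (h1 : s ≠ 1) (h0 : riemannZeta s ≠ 0) :
    zetaReg s = -deriv riemannZeta s / riemannZeta s - riemannZeta s := by
  have hs : s - 1 ≠ 0 := sub_ne_zero.mpr h1
  have he : riemannZeta =ᶠ[nhds s] fun z => (z - 1)⁻¹ * riemannZeta₁ z := by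
    filter_upwards [eventually_ne_nhds h1] with z hz using riemannZeta_eq_inv_sub_mul hz
  have hd : deriv riemannZeta s = -1 / (s - 1) ^ 2 * riemannZeta₁ s +
      (s - 1)⁻¹ * deriv riemannZeta₁ s := by
    rw [he.deriv_eq]
    have := (((hasDerivAt_id s).sub_const 1).inv hs).mul
      (differentiable_riemannZeta₁ s).hasDerivAt
    exact this.deriv
  have h2 : riemannZeta₁ s ≠ 0 := by
    rw [riemannZeta_eq_inv_sub_mul h1] at h0
    exact right_ne_zero_of_mul h0
  have h3 : riemannZeta₀ s = riemannZeta s - (s - 1)⁻¹ := by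
    rw [riemannZeta_eq_inv_sub_add h1]; ring
  rw [zetaReg, h3, hd]
  rw [riemannZeta_eq_inv_sub_mul h1]
  field_simp
  ring

lemma analyticAt_zetaReg {s : ℂ} (hs : 1 ≤ s.re) : AnalyticAt ℂ zetaReg s := by
  have h := differentiable_riemannZeta₁.analyticAt s
  exact (h.deriv.neg.div h (riemannZeta₁_ne_zero_of_one_le_re hs)).sub
    (differentiable_riemannZeta₀.analyticAt s)

lemma exists_norm_iteratedDeriv_zetaReg_le_of_one_le : ∃ C : ℝ, 0 ≤ C ∧ ∀ s : ℂ, 1 < s.re →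
    s.re ≤ 2 → 1 ≤ |s.im| → ‖iteratedDeriv 2 zetaReg s‖ ≤ C * |s.im| ^ (1 / 2 : ℝ) := by
  obtain ⟨K₁, hK₁, hd⟩ := exists_norm_iteratedDeriv_riemannZeta_le
  obtain ⟨K₂, hK₂, hi⟩ := exists_le_norm_riemannZeta
  refine ⟨7 * K₁ ^ 3 * K₂ ^ 3, by positivity, fun s h1 h2 ht => ?_⟩
  have hs1 : s ≠ 1 := by rintro rfl; simp at h1
  have h0 := riemannZeta_ne_zero_of_one_le_re h1.le
  have hev : zetaReg =ᶠ[nhds s] fun z => -deriv riemannZeta z / riemannZeta z - riemannZeta z := by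
    filter_upwards [eventually_ne_nhds hs1,
      (differentiableAt_riemannZeta hs1).continuousAt.eventually_ne h0] with z hz hz'
    exact zetaReg_eq hz hz'
  have han : AnalyticAt ℂ riemannZeta s := by
    refine Complex.analyticAt_iff_eventually_differentiableAt.mpr ?_
    filter_upwards [eventually_ne_nhds hs1] with z hz using differentiableAt_riemannZeta hz
  rw [hev.iteratedDeriv_eq, iteratedDeriv_two_neg_logDeriv_sub_self han h0]
  set X := |s.im| ^ (1 / 30 : ℝ) with hX
  have hX1 : 1 ≤ X := Real.one_le_rpow ht (by norm_num)
  set M := K₁ * X with hM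
  have hM1 : 1 ≤ M := one_le_mul_of_one_le_of_one_le hK₁ hX1
  have b0 : ‖riemannZeta s‖ ≤ M := hd s h1.le h2 ht 0 (by norm_num)
  have b1 : ‖iteratedDeriv 1 riemannZeta s‖ ≤ M := hd s h1.le h2 ht 1 (by norm_num)
  have b2 : ‖iteratedDeriv 2 riemannZeta s‖ ≤ M := hd s h1.le h2 ht 2 (by norm_num)
  have b3 : ‖iteratedDeriv 3 riemannZeta s‖ ≤ M := hd s h1.le h2 ht 3 (by norm_num)
  have bi := hi s h1 h2 ht
  set f0 := riemannZeta s
  set f1 := iteratedDeriv 1 riemannZeta s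
  set f2 := iteratedDeriv 2 riemannZeta s
  set f3 := iteratedDeriv 3 riemannZeta s
  have bn : ‖-(f3 * f0 ^ 2 - 3 * f1 * f2 * f0 + 2 * f1 ^ 3)‖ ≤ 6 * M ^ 3 := by
    rw [norm_neg]
    calc _ ≤ ‖f3 * f0 ^ 2‖ + ‖3 * f1 * f2 * f0‖ + ‖2 * f1 ^ 3‖ :=
          (norm_add_le _ _).trans (add_le_add_left (norm_sub_le _ _) _)
      _ = ‖f3‖ * ‖f0‖ ^ 2 + 3 * ‖f1‖ * ‖f2‖ * ‖f0‖ + 2 * ‖f1‖ ^ 3 := by simp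
      _ ≤ M * M ^ 2 + 3 * M * M * M + 2 * M ^ 3 := by gcongr
      _ = 6 * M ^ 3 := by ring
  have hY : 1 ≤ K₂ * X ^ 4 := one_le_mul_of_one_le_of_one_le hK₂ (one_le_pow₀ hX1)
  have bq : ‖-(f3 * f0 ^ 2 - 3 * f1 * f2 * f0 + 2 * f1 ^ 3) / f0 ^ 3‖ ≤
      6 * M ^ 3 * (K₂ * X ^ 4) ^ 3 := by
    rw [norm_div, norm_pow, div_eq_mul_inv, ← inv_pow]
    gcongr
  have b2' : ‖f2‖ ≤ M ^ 3 * (K₂ * X ^ 4) ^ 3 :=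
    b2.trans ((le_self_pow₀ hM1 (by norm_num)).trans
      (le_mul_of_one_le_right (by positivity) (one_le_pow₀ hY)))
  calc _ ≤ 6 * M ^ 3 * (K₂ * X ^ 4) ^ 3 + M ^ 3 * (K₂ * X ^ 4) ^ 3 :=
        (norm_sub_le _ _).trans (add_le_add bq b2')
    _ = 7 * K₁ ^ 3 * K₂ ^ 3 * X ^ 15 := by rw [hM]; ring
    _ = 7 * K₁ ^ 3 * K₂ ^ 3 * |s.im| ^ (1 / 2 : ℝ) := by
      rw [hX, ← Real.rpow_natCast (_ ^ _) 15, ← Real.rpow_mul (by positivity)]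
      norm_num

lemma exists_norm_iteratedDeriv_zetaReg_le : ∃ C : ℝ, 0 ≤ C ∧ ∀ s : ℂ, 1 < s.re →
    s.re ≤ 2 → ‖iteratedDeriv 2 zetaReg s‖ ≤ C * (1 + s.im ^ 2) ^ (1 / 4 : ℝ) := by
  obtain ⟨C, hC, h⟩ := exists_norm_iteratedDeriv_zetaReg_le_of_one_le
  have hc : IsCompact (Set.Icc (1 : ℝ) 2 ×ℂ Set.Icc (-1 : ℝ) 1) :=
    isCompact_Icc.reProdIm isCompact_Icc
  obtain ⟨C', hC'⟩ := hc.exists_bound_of_continuousOn (f := iteratedDeriv 2 zetaReg)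
    (fun z hz => ((analyticAt_zetaReg hz.1.1).iteratedDeriv_of_complex 2).continuousAt.continuousWithinAt)
  refine ⟨C + |C'|, by positivity, fun s h1 h2 => ?_⟩
  have hp : 1 ≤ (1 + s.im ^ 2) ^ (1 / 4 : ℝ) :=
    Real.one_le_rpow (by nlinarith) (by norm_num)
  rcases le_total 1 |s.im| with ht | ht
  · refine (h s h1 h2 ht).trans ?_
    refine mul_le_mul (by linarith [abs_nonneg C']) ?_ (by positivity) (by positivity)
    calc |s.im| ^ (1 / 2 : ℝ) = (|s.im| ^ (2 : ℝ)) ^ (1 / 4 : ℝ) := by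
          rw [← Real.rpow_mul (abs_nonneg _)]; norm_num
      _ ≤ _ := by
        gcongr
        rw [Real.rpow_two, sq_abs]; linarith
  · have := hC' s ⟨⟨h1.le, h2⟩, abs_le.mp ht⟩
    calc _ ≤ (C + |C'|) * 1 := by linarith [le_abs_self C']
      _ ≤ _ := by gcongr

/-- The kernel `max (1 - t) 0` on `t > 0`. -/
noncomputable def fejerCut (t : ℝ) : ℂ :=
  Set.indicator (Set.Ioc 0 1) (fun _ => 1 : ℝ → ℂ) t -
    Set.indicator (Set.Ioc 0 1) (fun t => (t : ℂ) ^ (1 : ℂ) : ℝ → ℂ) t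

lemma fejerCut_eq {t : ℝ} (ht : 0 < t) : fejerCut t = (max (1 - t) 0 : ℝ) := by
  rw [fejerCut]
  rcases le_or_gt t 1 with h | h
  · have : t ∈ Set.Ioc (0 : ℝ) 1 := ⟨ht, h⟩
    simp [this, max_eq_left (sub_nonneg.mpr h)]
  · have : t ∉ Set.Ioc (0 : ℝ) 1 := fun h' => absurd h'.2 (by linarith)
    simp [this, max_eq_right (sub_nonpos.mpr h.le)]

lemma hasMellin_fejerCut {s : ℂ} (hs : 0 < s.re) :
    HasMellin fejerCut s (1 / (s * (s + 1))) := by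
  have h1 := hasMellin_one_Ioc hs
  have h2 := hasMellin_cpow_Ioc 1 (s := s) (by simp; linarith)
  have h := hasMellin_sub h1.1 h2.1
  rw [h1.2, h2.2] at h
  have e0 : s ≠ 0 := by rintro rfl; simp at hs
  have e1 : s + 1 ≠ 0 := by
    intro h; have := congrArg Complex.re h; simp at this; linarith
  convert! h using 1
  field_simp
  ring

lemma one_add_sq_le_norm_mul {σ : ℝ} (hσ : 1 ≤ σ) (t : ℝ) :
    1 + t ^ 2 ≤ ‖((σ : ℂ) + t * Complex.I) * (σ + t * Complex.I + 1)‖ := by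
  have h1 : 1 + t ^ 2 ≤ ‖(σ : ℂ) + t * Complex.I‖ ^ 2 := by
    rw [← Complex.normSq_eq_norm_sq, Complex.normSq_apply]
    simp
    nlinarith
  have h2 : ‖(σ : ℂ) + t * Complex.I‖ ≤ ‖(σ : ℂ) + t * Complex.I + 1‖ := by
    rw [← sq_le_sq₀ (norm_nonneg _) (norm_nonneg _), ← Complex.normSq_eq_norm_sq,
      ← Complex.normSq_eq_norm_sq, Complex.normSq_apply, Complex.normSq_apply]
    simp
    nlinarith
  rw [norm_mul]
  calc _ ≤ _ := h1
    _ = ‖(σ : ℂ) + t * Complex.I‖ * ‖(σ : ℂ) + t * Complex.I‖ := sq _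
    _ ≤ _ := by gcongr

lemma continuous_fejerKernel {σ : ℝ} (hσ : 1 ≤ σ) : Continuous fun t : ℝ =>
    1 / (((σ : ℂ) + t * Complex.I) * (σ + t * Complex.I + 1)) := by
  refine continuous_const.div (by fun_prop) fun t h => ?_
  have := one_add_sq_le_norm_mul hσ t
  rw [h, norm_zero] at this
  nlinarith

lemma norm_fejerKernel_le {σ : ℝ} (hσ : 1 ≤ σ) (t : ℝ) :
    ‖1 / (((σ : ℂ) + t * Complex.I) * (σ + t * Complex.I + 1))‖ ≤ (1 + t ^ 2)⁻¹ := by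
  rw [norm_div, norm_one, one_div]
  have := one_add_sq_le_norm_mul hσ t
  gcongr

lemma integrable_fejerKernel {σ : ℝ} (hσ : 1 ≤ σ) : Integrable fun t : ℝ =>
    1 / (((σ : ℂ) + t * Complex.I) * (σ + t * Complex.I + 1)) :=
  integrable_inv_one_add_sq.mono' (continuous_fejerKernel hσ).aestronglyMeasurable
    (.of_forall (norm_fejerKernel_le hσ))

lemma fejerCut_eq_integral {σ : ℝ} (hσ : 1 ≤ σ) {u : ℝ} (hu : 0 < u) :
    ((max (1 - u) 0 : ℝ) : ℂ) = (1 / (2 * π)) • ∫ t : ℝ, (u : ℂ) ^ (-((σ : ℂ) + t * Complex.I)) •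
      (1 / (((σ : ℂ) + t * Complex.I) * (σ + t * Complex.I + 1))) := by
  have hre (t : ℝ) : 0 < ((σ : ℂ) + t * Complex.I).re := by simp; linarith
  have hm (t : ℝ) : mellin fejerCut ((σ : ℂ) + t * Complex.I) =
      1 / (((σ : ℂ) + t * Complex.I) * (σ + t * Complex.I + 1)) :=
    (hasMellin_fejerCut (hre t)).2
  have hcont : ContinuousAt fejerCut u := by
    have : fejerCut =ᶠ[nhds u] fun t => ((max (1 - t) 0 : ℝ) : ℂ) := by
      filter_upwards [lt_mem_nhds hu] with t ht using fejerCut_eq ht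
    refine ContinuousAt.congr ?_ this.symm
    fun_prop
  have := mellinInv_mellin_eq σ fejerCut hu
    (by simpa using (hasMellin_fejerCut (hre 0)).1)
    (by simpa only [Complex.VerticalIntegrable, hm] using integrable_fejerKernel hσ) hcont
  rw [← fejerCut_eq hu, ← this, mellinInv]
  simp only [hm]

lemma tsum_mul_max_one_sub_eq {c : ℕ → ℂ} (hc0 : c 0 = 0) {σ : ℝ} (hσ : 1 ≤ σ)
    (hc : LSeriesSummable c σ) {x : ℝ} (hx : 0 < x) :
    ∑' n : ℕ, c n * ((max (1 - n / x) 0 : ℝ) : ℂ) =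
      (1 / (2 * π)) • ∫ t : ℝ, (x : ℂ) ^ ((σ : ℂ) + t * Complex.I) *
        (1 / (((σ : ℂ) + t * Complex.I) * (σ + t * Complex.I + 1))) *
          LSeries c (σ + t * Complex.I) := by
  set k : ℝ → ℂ := fun t => 1 / (((σ : ℂ) + t * Complex.I) * (σ + t * Complex.I + 1)) with hk
  have hki : Integrable k := integrable_fejerKernel hσ
  set F : ℕ → ℝ → ℂ := fun n t => (x : ℂ) ^ ((σ : ℂ) + t * Complex.I) * k t *
    LSeries.term c (σ + t * Complex.I) n with hF
  have hxs (t : ℝ) : ‖(x : ℂ) ^ ((σ : ℂ) + t * Complex.I)‖ = x ^ σ := by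
    rw [Complex.norm_cpow_eq_rpow_re_of_pos hx]; simp
  have hterm (n : ℕ) (t : ℝ) : ‖LSeries.term c (σ + t * Complex.I) n‖ =
      ‖LSeries.term c σ n‖ := by
    rw [LSeries.norm_term_eq, LSeries.norm_term_eq]; simp
  have hnF (n : ℕ) (t : ℝ) : ‖F n t‖ = x ^ σ * ‖LSeries.term c σ n‖ * ‖k t‖ := by
    rw [hF]; simp only [norm_mul, hxs, hterm]; ring
  have hx0 : (x : ℂ) ≠ 0 := by exact_mod_cast hx.ne'
  have hFc (n : ℕ) : Continuous (F n) := by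
    have h1 : Continuous fun t : ℝ => (x : ℂ) ^ ((σ : ℂ) + t * Complex.I) :=
      Continuous.const_cpow (by fun_prop) (Or.inl hx0)
    refine (h1.mul (continuous_fejerKernel hσ)).mul ?_
    rcases eq_or_ne n 0 with rfl | hn
    · simpa using continuous_const
    · have hn' : (n : ℂ) ≠ 0 := by exact_mod_cast hn
      simp only [LSeries.term_of_ne_zero hn]
      refine continuous_const.div (Continuous.const_cpow (by fun_prop) (Or.inl hn')) fun t => ?_
      simp [Complex.cpow_eq_zero_iff, hn']
  have hFi (n : ℕ) : Integrable (F n) :=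
    (hki.norm.const_mul (x ^ σ * ‖LSeries.term c σ n‖)).mono' (hFc n).aestronglyMeasurable
      (.of_forall fun t => (hnF n t).le)
  have hsum : Summable fun n => ∫ t, ‖F n t‖ := by
    simp only [hnF, integral_const_mul]
    exact (hc.norm.mul_left _).mul_right _
  have hmain := hasSum_integral_of_summable_integral_norm hFi hsum
  have hint (n : ℕ) : (1 / (2 * π)) • ∫ t, F n t = c n * ((max (1 - n / x) 0 : ℝ) : ℂ) := by
    rcases eq_or_ne n 0 with rfl | hn
    · simp [hF, hc0]
    · have hn' : (0 : ℝ) < n := by exact_mod_cast Nat.pos_of_ne_zero hn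
      rw [fejerCut_eq_integral hσ (div_pos hn' hx), mul_smul_comm, ← integral_const_mul]
      congr 2
      ext t
      rw [hF]
      simp only [LSeries.term_of_ne_zero hn, smul_eq_mul]
      have : (((n : ℝ) / x : ℝ) : ℂ) ^ (-((σ : ℂ) + t * Complex.I)) =
          (x : ℂ) ^ ((σ : ℂ) + t * Complex.I) / (n : ℂ) ^ ((σ : ℂ) + t * Complex.I) := by
        rw [div_eq_mul_inv, Complex.ofReal_mul, Complex.mul_cpow_ofReal_nonneg hn'.le
          (inv_nonneg.mpr hx.le), Complex.cpow_neg, Complex.cpow_neg, Complex.ofReal_inv,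
          Complex.inv_cpow _ _ (by rw [Complex.arg_ofReal_of_nonneg hx.le]; exact pi_pos.ne), inv_inv]
        simp only [Complex.ofReal_natCast]
        ring
      rw [this]
      ring
  simp only [← hint]
  rw [(hmain.const_smul (1 / (2 * π))).tsum_eq]
  congr 2
  ext t
  rw [hF]
  simp only [tsum_mul_left, LSeries, hk]

/-- `(Λ(n) - 1) log² n` -/
noncomputable def vonMangoldtSubOneLogSq (n : ℕ) : ℝ := (Λ n - 1) * Real.log n ^ 2

lemma abscissaOfAbsConv_vonMangoldt_sub_one_le :
    LSeries.abscissaOfAbsConv (fun n => (Λ n : ℂ) - 1) ≤ 1 := by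
  refine LSeries.abscissaOfAbsConv_le_of_forall_lt_LSeriesSummable' fun y hy => ?_
  have hy : 1 < y := by exact_mod_cast hy
  exact (LSeriesSummable_vonMangoldt (by simpa)).sub
    (LSeriesSummable_one_iff.mpr (by simpa : 1 < (y : ℂ).re))

lemma LSeries_vonMangoldt_sub_one {s : ℂ} (hs : 1 < s.re) :
    LSeries (fun n => (Λ n : ℂ) - 1) s = zetaReg s := by
  have := LSeries_sub (LSeriesSummable_vonMangoldt hs) (LSeriesSummable_one_iff.mpr hs)
  rw [LSeries_vonMangoldt_eq_deriv_riemannZeta_div hs, LSeries_one_eq_riemannZeta hs] at this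
  rw [zetaReg_eq (by rintro rfl; simp at hs) (riemannZeta_ne_zero_of_one_le_re hs.le), ← this]
  rfl

lemma logMul_iterate_two_vonMangoldt_sub_one :
    LSeries.logMul^[2] (fun n => (Λ n : ℂ) - 1) = fun n => (vonMangoldtSubOneLogSq n : ℂ) := by
  ext n
  simp [LSeries.logMul, vonMangoldtSubOneLogSq, ← Complex.natCast_log]
  ring

lemma LSeriesSummable_vonMangoldtSubOneLogSq {s : ℂ} (hs : 1 < s.re) :
    LSeriesSummable (fun n => (vonMangoldtSubOneLogSq n : ℂ)) s := by
  refine LSeriesSummable_of_abscissaOfAbsConv_lt_re ?_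
  rw [← logMul_iterate_two_vonMangoldt_sub_one, LSeries.absicssaOfAbsConv_logPowMul]
  exact abscissaOfAbsConv_vonMangoldt_sub_one_le.trans_lt (by exact_mod_cast hs)

lemma LSeries_vonMangoldtSubOneLogSq {s : ℂ} (hs : 1 < s.re) :
    LSeries (fun n => (vonMangoldtSubOneLogSq n : ℂ)) s = iteratedDeriv 2 zetaReg s := by
  have h := LSeries_iteratedDeriv (f := fun n => (Λ n : ℂ) - 1) 2 (s := s)
    (abscissaOfAbsConv_vonMangoldt_sub_one_le.trans_lt (by exact_mod_cast hs))
  rw [logMul_iterate_two_vonMangoldt_sub_one] at h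
  have he : LSeries (fun n => (Λ n : ℂ) - 1) =ᶠ[nhds s] zetaReg := by
    filter_upwards [(isOpen_lt continuous_const Complex.continuous_re).mem_nhds hs] with z hz
      using LSeries_vonMangoldt_sub_one hz
  rw [he.iteratedDeriv_eq] at h
  simp [h]

lemma exists_abs_sum_vonMangoldtSubOneLogSq_mul_le : ∃ C : ℝ, 0 ≤ C ∧ ∀ x : ℝ, 1 ≤ x →
    |∑ n ∈ Finset.Icc 0 ⌊x⌋₊, vonMangoldtSubOneLogSq n * (1 - n / x)| ≤ C * x := by
  obtain ⟨C, hC, hb⟩ := exists_norm_iteratedDeriv_zetaReg_le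
  set I := ∫ t : ℝ, (1 + t ^ 2) ^ (-(3 / 2) / 2 : ℝ) with hI
  have hii : Integrable fun t : ℝ => (1 + t ^ 2) ^ (-(3 / 2) / 2 : ℝ) := by
    have := integrable_rpow_neg_one_add_norm_sq (E := ℝ) (μ := volume) (r := 3 / 2)
      (by norm_num)
    simpa using this
  have hI0 : 0 ≤ I := integral_nonneg fun t => by positivity
  refine ⟨(1 / (2 * π)) * (C * I), by positivity, fun x hx => ?_⟩
  have hx0 : 0 < x := by linarith
  have key (σ : ℝ) (h1 : 1 < σ) (h2 : σ ≤ 2) :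
      |∑ n ∈ Finset.Icc 0 ⌊x⌋₊, vonMangoldtSubOneLogSq n * (1 - n / x)| ≤
        (1 / (2 * π)) * (C * I) * x ^ σ := by
    have h := tsum_mul_max_one_sub_eq (c := fun n => (vonMangoldtSubOneLogSq n : ℂ))
      (by simp [vonMangoldtSubOneLogSq]) h1.le
      (LSeriesSummable_vonMangoldtSubOneLogSq (by simpa)) hx0
    have hl : ∑' n : ℕ, (vonMangoldtSubOneLogSq n : ℂ) * ((max (1 - n / x) 0 : ℝ) : ℂ) =
        ((∑ n ∈ Finset.Icc 0 ⌊x⌋₊, vonMangoldtSubOneLogSq n * (1 - n / x) : ℝ) : ℂ) := by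
      rw [tsum_eq_sum (s := Finset.Icc 0 ⌊x⌋₊), Complex.ofReal_sum]
      · refine Finset.sum_congr rfl fun n hn => ?_
        have : (n : ℝ) ≤ x := (Nat.le_floor_iff hx0.le).mp (Finset.mem_Icc.mp hn).2
        rw [max_eq_left, Complex.ofReal_mul]
        rw [sub_nonneg, div_le_one hx0]; exact this
      · intro n hn
        have : x < n := by
          rw [← Nat.floor_lt hx0.le]
          by_contra! hh
          exact hn (Finset.mem_Icc.mpr ⟨n.zero_le, hh⟩)
        rw [max_eq_right]
        · simp
        · rw [sub_nonpos, one_le_div hx0]; exact this.le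
    rw [hl] at h
    rw [← Real.norm_eq_abs, ← Complex.norm_real, h, norm_smul, Real.norm_of_nonneg (by positivity),
      mul_assoc]
    gcongr
    have hre (t : ℝ) : ((σ : ℂ) + t * Complex.I).re = σ := by simp
    have hbd (t : ℝ) : ‖(x : ℂ) ^ ((σ : ℂ) + t * Complex.I) *
        (1 / (((σ : ℂ) + t * Complex.I) * (σ + t * Complex.I + 1))) *
          LSeries (fun n => (vonMangoldtSubOneLogSq n : ℂ)) (σ + t * Complex.I)‖ ≤
        x ^ σ * C * (1 + t ^ 2) ^ (-(3 / 2) / 2 : ℝ) := by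
      have h3 := hb (σ + t * Complex.I) (by rwa [hre]) (by rwa [hre])
      rw [LSeries_vonMangoldtSubOneLogSq (by rwa [hre]), norm_mul, norm_mul,
        Complex.norm_cpow_eq_rpow_re_of_pos hx0, hre, mul_assoc, mul_assoc]
      refine mul_le_mul_of_nonneg_left ?_ (by positivity)
      have him : ((σ : ℂ) + t * Complex.I).im = t := by simp
      rw [him] at h3
      calc _ ≤ (1 + t ^ 2)⁻¹ * (C * (1 + t ^ 2) ^ (1 / 4 : ℝ)) :=
            mul_le_mul (norm_fejerKernel_le h1.le t) h3 (norm_nonneg _) (by positivity)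
        _ = C * ((1 + t ^ 2) ^ (-1 : ℝ) * (1 + t ^ 2) ^ (1 / 4 : ℝ)) := by
          rw [Real.rpow_neg_one]; ring
        _ = _ := by
          rw [← Real.rpow_add (by positivity)]; norm_num
    calc _ ≤ ∫ t : ℝ, x ^ σ * C * (1 + t ^ 2) ^ (-(3 / 2) / 2 : ℝ) :=
          norm_integral_le_of_norm_le (hii.const_mul _) (.of_forall hbd)
      _ = C * I * x ^ σ := by rw [integral_const_mul]; ring
  have hlim : Tendsto (fun σ : ℝ => (1 / (2 * π)) * (C * I) * x ^ σ) (nhdsWithin 1 (Set.Ioi 1))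
      (nhds ((1 / (2 * π)) * (C * I) * x ^ (1 : ℝ))) := by
    refine Tendsto.mono_left ?_ nhdsWithin_le_nhds
    exact (Real.continuousAt_const_rpow hx0.ne').tendsto.const_mul _
  rw [Real.rpow_one] at hlim
  refine ge_of_tendsto hlim ?_
  filter_upwards [Ioo_mem_nhdsGT (show (1 : ℝ) < 2 by norm_num)] with σ hσ
  exact key σ hσ.1 hσ.2.le

lemma sum_Icc_zero_add_sum_Ioc (f : ℕ → ℝ) {m n : ℕ} (h : m ≤ n) :
    ∑ k ∈ Finset.Icc 0 m, f k + ∑ k ∈ Finset.Ioc m n, f k = ∑ k ∈ Finset.Icc 0 n, f k := by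
  rw [← Finset.sum_union]
  · congr 1
    ext k; simp; omega
  · rw [Finset.disjoint_left]; intro k; simp; omega

lemma neg_le_sum_Ioc_mul {c w : ℕ → ℝ} {L h x y : ℝ} (hx : 0 ≤ x) (hxy : x ≤ y) (hL : 0 ≤ L)
    (hh : 0 ≤ h) (hyh : y - x ≤ h)
    (hc : ∀ n ∈ Finset.Ioc ⌊x⌋₊ ⌊y⌋₊, -L ≤ c n)
    (hw : ∀ n ∈ Finset.Ioc ⌊x⌋₊ ⌊y⌋₊, 0 ≤ w n ∧ w n ≤ h) :
    -((h + 1) * (L * h)) ≤ ∑ n ∈ Finset.Ioc ⌊x⌋₊ ⌊y⌋₊, c n * w n := by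
  have h1 : ∑ n ∈ Finset.Ioc ⌊x⌋₊ ⌊y⌋₊, (-(L * h)) ≤ ∑ n ∈ Finset.Ioc ⌊x⌋₊ ⌊y⌋₊, c n * w n := by
    refine Finset.sum_le_sum fun n hn => ?_
    obtain ⟨a, b⟩ := hw n hn
    have := hc n hn
    nlinarith [mul_nonneg hL (sub_nonneg.mpr b)]
  rw [Finset.sum_const, Nat.card_Ioc, nsmul_eq_mul, Nat.cast_sub (Nat.floor_mono hxy)] at h1
  have h2 : (⌊y⌋₊ : ℝ) ≤ y := Nat.floor_le (hx.trans hxy)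
  have h3 := Nat.lt_floor_add_one x
  have h4 : ((⌊y⌋₊ : ℝ) - ⌊x⌋₊) * (L * h) ≤ (h + 1) * (L * h) :=
    mul_le_mul_of_nonneg_right (by linarith) (by positivity)
  linarith

lemma mem_Ioc_floor {x y : ℝ} (hx : 0 ≤ x) (hxy : x ≤ y) {n : ℕ}
    (hn : n ∈ Finset.Ioc ⌊x⌋₊ ⌊y⌋₊) : x < n ∧ (n : ℝ) ≤ y := by
  rw [Finset.mem_Ioc, Nat.floor_lt hx, Nat.le_floor_iff (hx.trans hxy)] at hn
  exact hn

lemma neg_log_sq_le_vonMangoldtSubOneLogSq (n : ℕ) :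
    -(Real.log n ^ 2) ≤ vonMangoldtSubOneLogSq n := by
  rw [vonMangoldtSubOneLogSq]
  nlinarith [mul_nonneg (vonMangoldt_nonneg (n := n)) (sq_nonneg (Real.log n))]

lemma exists_abs_sum_vonMangoldtSubOneLogSq_le_of_le : ∃ C : ℝ, 0 ≤ C ∧ ∀ x : ℝ, rexp 2 ≤ x →
    |∑ n ∈ Finset.Icc 0 ⌊x⌋₊, vonMangoldtSubOneLogSq n| ≤ C * (x * Real.log x) := by
  obtain ⟨C, hC, hS⟩ := exists_abs_sum_vonMangoldtSubOneLogSq_mul_le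
  set c := vonMangoldtSubOneLogSq
  have hS' (x : ℝ) (hx : 1 ≤ x) : |∑ n ∈ Finset.Icc 0 ⌊x⌋₊, c n * (x - n)| ≤ C * x ^ 2 := by
    have h1 : ∑ n ∈ Finset.Icc 0 ⌊x⌋₊, c n * (x - n) =
        x * ∑ n ∈ Finset.Icc 0 ⌊x⌋₊, c n * (1 - n / x) := by
      rw [Finset.mul_sum]
      refine Finset.sum_congr rfl fun n _ => ?_
      have : x ≠ 0 := by linarith
      field_simp
    rw [h1, abs_mul, abs_of_nonneg (by linarith), sq, ← mul_assoc, mul_comm C, mul_assoc]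
    exact mul_le_mul_of_nonneg_left (hS x hx) (by linarith)
  have hsplit (x y : ℝ) (hxy : x ≤ y) :
      ∑ n ∈ Finset.Icc 0 ⌊y⌋₊, c n * (y - n) - ∑ n ∈ Finset.Icc 0 ⌊x⌋₊, c n * (x - n) =
      (y - x) * ∑ n ∈ Finset.Icc 0 ⌊x⌋₊, c n + ∑ n ∈ Finset.Ioc ⌊x⌋₊ ⌊y⌋₊, c n * (y - n) := by
    rw [← sum_Icc_zero_add_sum_Ioc _ (Nat.floor_mono hxy), Finset.mul_sum, add_sub_right_comm,
      ← Finset.sum_sub_distrib]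
    congr 1
    exact Finset.sum_congr rfl fun n _ => by ring
  have hlogbd (x y Y : ℝ) (hx : 0 ≤ x) (hxy : x ≤ y) (hY : y ≤ Y) (n : ℕ)
      (hn : n ∈ Finset.Ioc ⌊x⌋₊ ⌊y⌋₊) : -(Real.log Y ^ 2) ≤ c n := by
    obtain ⟨h1, h2⟩ := mem_Ioc_floor hx hxy hn
    have hn0 : 1 ≤ n := by
      have : (0 : ℝ) < n := by linarith
      exact_mod_cast this
    have hn1 : (1 : ℝ) ≤ n := by exact_mod_cast hn0
    refine le_trans ?_ (neg_log_sq_le_vonMangoldtSubOneLogSq n)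
    have h3 : Real.log n ≤ Real.log Y := Real.log_le_log (by linarith) (by linarith)
    have h4 := Real.log_nonneg hn1
    nlinarith
  refine ⟨5 * C + 8, by linarith, fun x hx => ?_⟩
  have he : 3 ≤ rexp 2 := by have := Real.add_one_le_exp 2; linarith
  have hx0 : 0 < x := by linarith
  set l := Real.log x with hl
  have hl2 : 2 ≤ l := by rwa [hl, Real.le_log_iff_exp_le hx0]
  have hlx : l ≤ x := (Real.log_le_sub_one_of_pos hx0).trans (by linarith)
  set h := x / l with hh
  have hlh : h * l = x := by rw [hh]; field_simp
  have hh1 : 1 ≤ h := by rw [hh, one_le_div (by linarith)]; exact hlx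
  have hhx : 2 * h ≤ x := by nlinarith
  have hl2x : Real.log (x + h) ≤ 2 * l := by
    calc Real.log (x + h) ≤ Real.log (x ^ 2) := Real.log_le_log (by linarith) (by nlinarith)
      _ = 2 * l := by rw [Real.log_pow, ← hl]; norm_num
  have hlp : 0 ≤ Real.log (x + h) := Real.log_nonneg (by linarith)
  have hL2 : Real.log (x + h) ^ 2 ≤ 4 * l ^ 2 := by nlinarith
  have hE : (h + 1) * (Real.log (x + h) ^ 2 * h) ≤ h * (8 * (x * l)) := by
    calc (h + 1) * (Real.log (x + h) ^ 2 * h) ≤ (2 * h) * (4 * l ^ 2 * h) := by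
          gcongr; linarith
      _ = h * (8 * ((h * l) * l)) := by ring
      _ = _ := by rw [hlh]
  have hxx : x ^ 2 = h * (x * l) := by
    rw [sq]; nth_rw 1 [← hlh]; ring
  have s0 := abs_le.mp (hS' x (by linarith))
  have s1 := abs_le.mp (hS' (x + h) (by linarith))
  have s2 := abs_le.mp (hS' (x - h) (by linarith))
  have q1 : C * (x + h) ^ 2 ≤ 4 * (C * x ^ 2) := by
    have : (x + h) ^ 2 ≤ 4 * x ^ 2 := by nlinarith
    nlinarith
  have q2 : C * (x - h) ^ 2 ≤ C * x ^ 2 := by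
    have : (x - h) ^ 2 ≤ x ^ 2 := by nlinarith
    exact mul_le_mul_of_nonneg_left this hC
  have e1 := hsplit x (x + h) (by linarith)
  have e2 := hsplit (x - h) x (by linarith)
  have b1 := neg_le_sum_Ioc_mul (c := c) (w := fun n => x + h - n) (x := x) (y := x + h)
    (L := Real.log (x + h) ^ 2) (h := h) hx0.le (by linarith) (by positivity) (by linarith)
    (by linarith) (hlogbd x (x + h) (x + h) hx0.le (by linarith) le_rfl) (fun n hn => by
      obtain ⟨u, v⟩ := mem_Ioc_floor hx0.le (by linarith) hn
      constructor <;> linarith)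
  have b2 := neg_le_sum_Ioc_mul (c := c) (w := fun n => n - (x - h)) (x := x - h) (y := x)
    (L := Real.log (x + h) ^ 2) (h := h) (by linarith) (by linarith) (by positivity) (by linarith)
    (by linarith) (hlogbd (x - h) x (x + h) (by linarith) (by linarith) (by linarith))
    (fun n hn => by
      obtain ⟨u, v⟩ := mem_Ioc_floor (by linarith) (by linarith) hn
      constructor <;> linarith)
  have e3 : h * ∑ n ∈ Finset.Icc 0 ⌊x - h⌋₊, c n + ∑ n ∈ Finset.Ioc ⌊x - h⌋₊ ⌊x⌋₊, c n * (x - n) =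
      h * ∑ n ∈ Finset.Icc 0 ⌊x⌋₊, c n -
        ∑ n ∈ Finset.Ioc ⌊x - h⌋₊ ⌊x⌋₊, c n * (n - (x - h)) := by
    rw [← sum_Icc_zero_add_sum_Ioc c (Nat.floor_mono (by linarith : x - h ≤ x)), mul_add,
      add_sub_assoc, Finset.mul_sum (s := Finset.Ioc _ _), ← Finset.sum_sub_distrib]
    congr 1
    exact Finset.sum_congr rfl fun n _ => by ring
  rw [add_sub_cancel_left] at e1
  rw [sub_sub_cancel, e3] at e2
  have hpos : 0 < h := by linarith
  rw [abs_le]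
  constructor <;> refine le_of_mul_le_mul_left ?_ hpos
  · have : 5 * (C * x ^ 2) = h * (5 * C * (x * l)) := by rw [hxx]; ring
    have : 0 ≤ C * x ^ 2 := by positivity
    nlinarith
  · have : 5 * (C * x ^ 2) = h * (5 * C * (x * l)) := by rw [hxx]; ring
    nlinarith

lemma exists_abs_sum_vonMangoldtSubOneLogSq_le : ∃ C : ℝ, 0 ≤ C ∧ ∀ x : ℝ, 2 ≤ x →
    |∑ n ∈ Finset.Icc 0 ⌊x⌋₊, vonMangoldtSubOneLogSq n| ≤ C * (x * Real.log x) := by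
  obtain ⟨C, hC, h⟩ := exists_abs_sum_vonMangoldtSubOneLogSq_le_of_le
  set D := ∑ n ∈ Finset.Icc 0 ⌊rexp 2⌋₊, |vonMangoldtSubOneLogSq n| with hD
  have hD0 : 0 ≤ D := Finset.sum_nonneg fun _ _ => abs_nonneg _
  refine ⟨C + D, by positivity, fun x hx => ?_⟩
  have hxl : 1 ≤ x * Real.log x := by
    have h1 := Real.log_two_gt_d9
    have h2 := Real.log_le_log (by norm_num) hx
    nlinarith
  rcases le_total (rexp 2) x with h2 | h2
  · nlinarith [h x h2]
  · have : |∑ n ∈ Finset.Icc 0 ⌊x⌋₊, vonMangoldtSubOneLogSq n| ≤ D :=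
      (Finset.abs_sum_le_sum_abs _ _).trans (Finset.sum_le_sum_of_subset_of_nonneg
        (Finset.Icc_subset_Icc le_rfl (Nat.floor_mono h2)) fun _ _ _ => abs_nonneg _)
    nlinarith

lemma exists_abs_sum_vonMangoldt_sub_one_mul_log_le : ∃ C : ℝ, 0 ≤ C ∧ ∀ x : ℝ, 2 ≤ x →
    |∑ n ∈ Finset.Icc 0 ⌊x⌋₊, (Λ n - 1) * Real.log n| ≤ C * x := by
  obtain ⟨C, hC, h⟩ := exists_abs_sum_vonMangoldtSubOneLogSq_le
  have hlog2 : 0 < Real.log 2 := Real.log_pos (by norm_num)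
  refine ⟨C + C / Real.log 2, by positivity, fun x hx => ?_⟩
  have hlogpos (t : ℝ) (ht : 2 ≤ t) : 0 < Real.log t := Real.log_pos (by linarith)
  have hder (t : ℝ) (ht : 2 ≤ t) :
      HasDerivAt (fun t : ℝ => (Real.log t)⁻¹) (-t⁻¹ / Real.log t ^ 2) t :=
    (Real.hasDerivAt_log (by linarith)).inv (hlogpos t ht).ne'
  have hdc : ContinuousOn (fun t : ℝ => -t⁻¹ / Real.log t ^ 2) (Set.Icc 2 x) := by
    intro t ht
    have h1 : t ≠ 0 := by linarith [ht.1]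
    refine ContinuousAt.continuousWithinAt ?_
    exact (continuousAt_inv₀ h1).neg.div ((Real.continuousAt_log h1).pow 2)
      (pow_ne_zero 2 (hlogpos t ht.1).ne')
  have hab := sum_mul_eq_sub_integral_mul₁ (c := vonMangoldtSubOneLogSq)
    (f := fun t : ℝ => (Real.log t)⁻¹) (by simp [vonMangoldtSubOneLogSq])
    (by simp [vonMangoldtSubOneLogSq]) x
    (fun t ht => (hder t ht.1).differentiableAt)
    (hdc.integrableOn_Icc.congr_fun (fun t ht => (hder t ht.1).deriv.symm) measurableSet_Icc)
  have hsum : ∑ n ∈ Finset.Icc 0 ⌊x⌋₊, (Λ n - 1) * Real.log n =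
      ∑ k ∈ Finset.Icc 0 ⌊x⌋₊, (Real.log k)⁻¹ * vonMangoldtSubOneLogSq k := by
    refine Finset.sum_congr rfl fun n _ => ?_
    rw [vonMangoldtSubOneLogSq]
    rcases eq_or_ne (Real.log n) 0 with h0 | h0
    · simp [h0]
    · field_simp
  rw [hsum, hab]
  have h1 : |(Real.log x)⁻¹ * ∑ n ∈ Finset.Icc 0 ⌊x⌋₊, vonMangoldtSubOneLogSq n| ≤ C * x := by
    rw [abs_mul, abs_of_pos (inv_pos.mpr (hlogpos x hx)), inv_mul_le_iff₀ (hlogpos x hx)]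
    exact (h x hx).trans (le_of_eq (by ring))
  have h2 : |∫ t in Set.Ioc 2 x, deriv (fun t : ℝ => (Real.log t)⁻¹) t *
      ∑ k ∈ Finset.Icc 0 ⌊t⌋₊, vonMangoldtSubOneLogSq k| ≤ C / Real.log 2 * (x - 2) := by
    have := norm_setIntegral_le_of_norm_le_const (μ := volume) (s := Set.Ioc 2 x)
      (f := fun t => deriv (fun t : ℝ => (Real.log t)⁻¹) t *
      ∑ k ∈ Finset.Icc 0 ⌊t⌋₊, vonMangoldtSubOneLogSq k) (C := C / Real.log 2) (by simp) ?_
    · rwa [Real.volume_real_Ioc_of_le hx] at this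
    · intro t ht
      have ht2 := ht.1.le
      have hlt := hlogpos t ht2
      have ht0 : 0 < t := by linarith
      rw [(hder t ht2).deriv, norm_mul, Real.norm_eq_abs, Real.norm_eq_abs, neg_div, abs_neg,
        abs_of_pos (by positivity)]
      calc t⁻¹ / Real.log t ^ 2 * |∑ k ∈ Finset.Icc 0 ⌊t⌋₊, vonMangoldtSubOneLogSq k|
          ≤ t⁻¹ / Real.log t ^ 2 * (C * (t * Real.log t)) := by
            refine mul_le_mul_of_nonneg_left (h t ht2) (by positivity)
        _ = C / Real.log t := by field_simp
        _ ≤ C / Real.log 2 := by gcongr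
  have h3 : 0 ≤ C / Real.log 2 := by positivity
  calc _ ≤ C * x + C / Real.log 2 * (x - 2) := (abs_sub _ _).trans (add_le_add h1 h2)
    _ ≤ (C + C / Real.log 2) * x := by nlinarith

lemma abs_sum_log_sub_le {x : ℝ} (hx : 2 ≤ x) :
    |∑ n ∈ Finset.Icc 0 ⌊x⌋₊, Real.log n - x * Real.log x| ≤ 2 * x := by
  set N := ⌊x⌋₊ with hN
  have hx0 : 0 < x := by linarith
  have hNx : (N : ℝ) ≤ x := Nat.floor_le hx0.le
  have hxN : x < N + 1 := Nat.lt_floor_add_one x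
  have hN1 : (1 : ℝ) ≤ N := by
    exact_mod_cast (Nat.le_floor (by simpa using by linarith) : 1 ≤ ⌊x⌋₊)
  have hsum (m : ℕ) : ∑ n ∈ Finset.Icc 0 m, Real.log n = Real.log m.factorial := by
    induction m with
    | zero => simp
    | succ m ih =>
      rw [← sum_Icc_zero_add_sum_Ioc _ (Nat.le_succ m), ih]
      simp only [Nat.succ_eq_add_one, Nat.Ioc_succ_singleton, Finset.sum_singleton]
      rw [Nat.factorial_succ, Nat.cast_mul, Real.log_mul (by positivity) (by positivity), add_comm]
  rw [hsum]
  have hNp : (0 : ℝ) < N := by linarith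
  have hlx : Real.log x ≤ x - 1 := Real.log_le_sub_one_of_pos hx0
  have hup : Real.log N.factorial ≤ x * Real.log x := by
    calc Real.log N.factorial ≤ Real.log ((N : ℝ) ^ N) :=
          Real.log_le_log (by positivity) (by exact_mod_cast Nat.factorial_le_pow N)
      _ = N * Real.log N := Real.log_pow _ _
      _ ≤ _ := by
        have := Real.log_le_log hNp hNx
        have := Real.log_nonneg hN1
        gcongr
  have hlo : N * Real.log N - N ≤ Real.log N.factorial := by
    have h1 := Real.pow_div_factorial_le_exp (N : ℝ) hNp.le N
    have h2 := Real.log_le_log (by positivity) h1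
    rw [Real.log_exp, Real.log_div (by positivity) (by positivity), Real.log_pow] at h2
    linarith
  have hd : Real.log x - Real.log N ≤ (x - N) / N := by
    have := Real.log_le_sub_one_of_pos (div_pos hx0 hNp)
    rw [Real.log_div hx0.ne' hNp.ne'] at this
    rw [sub_div, div_self hNp.ne']
    exact this
  have hd' : N * (Real.log x - Real.log N) ≤ x - N := by
    rw [le_div_iff₀ hNp] at hd; linarith
  have hl0 : 0 ≤ Real.log x := Real.log_nonneg (by linarith)
  rw [abs_le]
  constructor
  · nlinarith
  · linarith

lemma sum_vonMangoldt_mul_log_sub_le {x : ℝ} (hx : 2 ≤ x) :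
    ∑ n ∈ Finset.Icc 0 ⌊x⌋₊, Λ n * (Real.log n - Λ n) ≤ 32 * x := by
  have hx0 : 0 < x := by linarith
  have h1 : ∑ n ∈ Finset.Icc 0 ⌊x⌋₊, Λ n * (Real.log n - Λ n) ≤
      ∑ n ∈ Finset.Ioc 0 ⌊x⌋₊ with ¬n.Prime, Λ n * Real.log x := by
    rw [Finset.sum_filter, ← sum_Icc_zero_add_sum_Ioc _ (Nat.zero_le ⌊x⌋₊)]
    simp only [Finset.Icc_self, Finset.sum_singleton, ArithmeticFunction.map_zero, zero_mul, zero_add]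
    refine Finset.sum_le_sum fun n hn => ?_
    split_ifs with hp
    · rw [vonMangoldt_apply_prime hp]; simp
    · obtain ⟨hn1, hn2⟩ := Finset.mem_Ioc.mp hn
      have : Real.log n ≤ Real.log x :=
        Real.log_le_log (by exact_mod_cast hn1) ((Nat.le_floor_iff hx0.le).mp hn2)
      refine mul_le_mul_of_nonneg_left ?_ vonMangoldt_nonneg
      linarith [vonMangoldt_nonneg (n := n)]
  rw [← Finset.sum_mul, ← Chebyshev.psi_sub_theta_eq_sum_not_prime] at h1
  refine h1.trans ?_
  have hl0 : 0 ≤ Real.log x := Real.log_nonneg (by linarith)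
  have h2 := Chebyshev.psi_sub_theta_le (x := x) (by linarith)
  have h3 : Real.log x ≤ 4 * x ^ (1 / 4 : ℝ) := by
    have := Real.log_le_rpow_div hx0.le (ε := 1 / 4) (by norm_num)
    linarith
  calc _ ≤ 2 * √x * Real.log x * Real.log x := by gcongr
    _ ≤ 2 * √x * (4 * x ^ (1 / 4 : ℝ)) * (4 * x ^ (1 / 4 : ℝ)) := by gcongr
    _ = 32 * (√x * (x ^ (1 / 4 : ℝ) * x ^ (1 / 4 : ℝ))) := by ring
    _ = 32 * (√x * √x) := by
      rw [← Real.rpow_add hx0, Real.sqrt_eq_rpow]; norm_num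
    _ = 32 * x := by rw [Real.mul_self_sqrt hx0.le]

lemma exists_abs_sum_vonMangoldt_sq_sub_le : ∃ C : ℝ, 0 ≤ C ∧ ∀ x : ℝ, 2 ≤ x →
    |∑ n ∈ Finset.Icc 0 ⌊x⌋₊, Λ n ^ 2 - x * Real.log x| ≤ C * x := by
  obtain ⟨C, hC, h⟩ := exists_abs_sum_vonMangoldt_sub_one_mul_log_le
  refine ⟨C + 34, by positivity, fun x hx => ?_⟩
  have h1 := abs_le.mp (h x hx)
  have h2 := abs_le.mp (abs_sum_log_sub_le hx)
  have h3 := sum_vonMangoldt_mul_log_sub_le hx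
  have h4 : 0 ≤ ∑ n ∈ Finset.Icc 0 ⌊x⌋₊, Λ n * (Real.log n - Λ n) :=
    Finset.sum_nonneg fun n _ =>
      mul_nonneg vonMangoldt_nonneg (sub_nonneg.mpr vonMangoldt_le_log)
  have h5 : ∑ n ∈ Finset.Icc 0 ⌊x⌋₊, Λ n ^ 2 = ∑ n ∈ Finset.Icc 0 ⌊x⌋₊, (Λ n - 1) * Real.log n +
      ∑ n ∈ Finset.Icc 0 ⌊x⌋₊, Real.log n -
        ∑ n ∈ Finset.Icc 0 ⌊x⌋₊, Λ n * (Real.log n - Λ n) := by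
    rw [← Finset.sum_add_distrib, ← Finset.sum_sub_distrib]
    exact Finset.sum_congr rfl fun n _ => by ring
  rw [h5, abs_le]
  constructor <;> linarith [h1.1, h1.2, h2.1, h2.2]

lemma exists_log_div_pow_le {a : ℝ} (ha : 1 < a) (b : ℕ) {x : ℝ} (hx : 0 < x) :
    ∃ D : ℝ, ∀ t, x ≤ t → Real.log (t / x) ^ b ≤ D * t ^ ((a - 1) / 2) := by
  have hε : 0 < (a - 1) / (2 * (b + 1)) := by
    have : 0 < a - 1 := by linarith
    positivity
  set ε := (a - 1) / (2 * (b + 1)) with hεd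
  refine ⟨(ε ^ b)⁻¹ * (x ^ ((a - 1) / 2))⁻¹, fun t ht => ?_⟩
  have hy : 1 ≤ t / x := (one_le_div hx).mpr ht
  have hεb : ε * b ≤ (a - 1) / 2 := by
    have : ε * (b + 1) = (a - 1) / 2 := by rw [hεd]; field_simp
    nlinarith
  calc Real.log (t / x) ^ b ≤ ((t / x) ^ ε / ε) ^ b :=
        pow_le_pow_left₀ (Real.log_nonneg hy) (Real.log_le_rpow_div (by linarith) hε) b
    _ = (ε ^ b)⁻¹ * (t / x) ^ (ε * b) := by
      rw [div_pow, ← Real.rpow_natCast ((t / x) ^ ε), ← Real.rpow_mul (by linarith)]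
      ring
    _ ≤ (ε ^ b)⁻¹ * (t / x) ^ ((a - 1) / 2) := by
      gcongr
    _ = _ := by rw [Real.div_rpow (by linarith) hx.le]; ring

lemma continuousOn_rpow_mul_log_div_pow (a : ℝ) (b : ℕ) {x : ℝ} (hx : 0 < x) :
    ContinuousOn (fun t : ℝ => t ^ (-a) * Real.log (t / x) ^ b) (Set.Ici x) := by
  intro t ht
  have ht0 : 0 < t := hx.trans_le ht
  refine ContinuousAt.continuousWithinAt ?_
  exact (Real.continuousAt_rpow_const _ _ (Or.inl ht0.ne')).mul
    (((continuousAt_id.div_const x).log (div_pos ht0 hx).ne').pow b)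

lemma integrableOn_rpow_mul_log_div_pow {a : ℝ} (ha : 1 < a) (b : ℕ) {x : ℝ} (hx : 0 < x) :
    IntegrableOn (fun t : ℝ => t ^ (-a) * Real.log (t / x) ^ b) (Set.Ioi x) := by
  obtain ⟨D, hD⟩ := exists_log_div_pow_le ha b hx
  have hi := (integrableOn_Ioi_rpow_of_lt (a := -(a + 1) / 2) (by linarith) hx).const_mul D
  refine Integrable.mono' hi (((continuousOn_rpow_mul_log_div_pow a b hx).mono
    Set.Ioi_subset_Ici_self).aestronglyMeasurable measurableSet_Ioi) ?_
  refine (ae_restrict_iff' measurableSet_Ioi).mpr (.of_forall fun t ht => ?_)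
  have ht : x < t := ht
  have ht0 : 0 < t := hx.trans ht
  have hl : 0 ≤ Real.log (t / x) := Real.log_nonneg ((one_le_div hx).mpr ht.le)
  rw [Real.norm_of_nonneg (by positivity)]
  calc _ ≤ t ^ (-a) * (D * t ^ ((a - 1) / 2)) := by
        gcongr
        exact hD t ht.le
    _ = D * (t ^ (-a) * t ^ ((a - 1) / 2)) := by ring
    _ = _ := by rw [← Real.rpow_add ht0]; ring_nf

lemma tendsto_rpow_one_sub_mul_log_div_pow {a : ℝ} (ha : 1 < a) (b : ℕ) {x : ℝ} (hx : 0 < x) :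
    Tendsto (fun t : ℝ => t ^ (1 - a) * Real.log (t / x) ^ b) atTop (nhds 0) := by
  obtain ⟨D, hD⟩ := exists_log_div_pow_le ha b hx
  have hz : Tendsto (fun t : ℝ => D * t ^ (-((a - 1) / 2))) atTop (nhds 0) := by
    simpa using (tendsto_rpow_neg_atTop (show 0 < (a - 1) / 2 by linarith)).const_mul D
  refine squeeze_zero' ?_ ?_ hz
  · filter_upwards [eventually_ge_atTop x] with t ht
    have ht0 : 0 < t := hx.trans_le ht
    have hl : 0 ≤ Real.log (t / x) := Real.log_nonneg ((one_le_div hx).mpr ht)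
    positivity
  · filter_upwards [eventually_ge_atTop x] with t ht
    have ht0 : 0 < t := hx.trans_le ht
    calc _ ≤ t ^ (1 - a) * (D * t ^ ((a - 1) / 2)) := by
          gcongr
          exact hD t ht
      _ = D * (t ^ (1 - a) * t ^ ((a - 1) / 2)) := by ring
      _ = _ := by rw [← Real.rpow_add ht0]; ring_nf

lemma hasDerivAt_log_div_pow (b : ℕ) {x t : ℝ} (hx : 0 < x) (ht : 0 < t) :
    HasDerivAt (fun t : ℝ => Real.log (t / x) ^ b) (b * Real.log (t / x) ^ (b - 1) * t⁻¹) t := by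
  have h1 : HasDerivAt (fun t : ℝ => Real.log (t / x)) t⁻¹ t := by
    have := ((hasDerivAt_id t).div_const x).log (div_pos ht hx).ne'
    convert! this using 1
    simp only [id]
    field_simp
  exact h1.pow b

lemma integral_Ioi_rpow_mul_log_div_pow {a : ℝ} (ha : 1 < a) (b : ℕ) {x : ℝ} (hx : 0 < x) :
    ∫ t in Set.Ioi x, t ^ (-a) * Real.log (t / x) ^ b =
      b.factorial * x ^ (1 - a) / (a - 1) ^ (b + 1) := by
  have ha1 : a - 1 ≠ 0 := by linarith
  induction b with
  | zero =>
    simp only [pow_zero, mul_one]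
    rw [integral_Ioi_rpow_of_lt (by linarith) hx, show -a + 1 = 1 - a by ring]
    simp only [Nat.factorial_zero, Nat.cast_one, one_mul, zero_add, pow_one]
    rw [← neg_sub a 1, neg_div_neg_eq]
  | succ b ih =>
    have h1 := integrableOn_rpow_mul_log_div_pow ha b hx
    have h2 := integrableOn_rpow_mul_log_div_pow ha (b + 1) hx
    have hd : ∀ t ∈ Set.Ici x, HasDerivAt (fun t : ℝ => t ^ (1 - a) * Real.log (t / x) ^ (b + 1))
        ((1 - a) * (t ^ (-a) * Real.log (t / x) ^ (b + 1)) +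
          (b + 1) * (t ^ (-a) * Real.log (t / x) ^ b)) t := by
      intro t ht
      have ht0 : 0 < t := hx.trans_le ht
      have := (Real.hasDerivAt_rpow_const (p := 1 - a) (Or.inl ht0.ne')).mul
        (hasDerivAt_log_div_pow (b + 1) hx ht0)
      convert! this using 1
      have e : t ^ (1 - a) = t ^ (-a) * t := by
        rw [show 1 - a = -a + 1 by ring, Real.rpow_add_one ht0.ne']
      rw [e, show 1 - a - 1 = -a by ring]
      push_cast
      field_simp
    have h := integral_Ioi_of_hasDerivAt_of_tendsto' hd
      ((h2.const_mul (1 - a)).add (h1.const_mul ((b : ℝ) + 1)))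
      (tendsto_rpow_one_sub_mul_log_div_pow ha (b + 1) hx)
    rw [integral_add (h2.const_mul _) (h1.const_mul _), integral_const_mul, integral_const_mul,
      ih, div_self hx.ne', Real.log_one, zero_pow (by omega), mul_zero, sub_zero] at h
    rw [Nat.factorial_succ]
    push_cast
    rw [eq_div_iff (pow_ne_zero _ ha1)]
    field_simp at h
    have h' : (a - 1) * ∫ t in Set.Ioi x, t ^ (-a) * Real.log (t / x) ^ (b + 1) =
        (b + 1) * (b.factorial * x ^ (1 - a) / (a - 1) ^ (b + 1)) := by
      field_simp
      linarith
    rw [pow_succ, mul_comm, mul_assoc, h']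
    field_simp

lemma exists_hasSum_vonMangoldt_sq_tail {a : ℝ} (ha : 1 < a) (b : ℕ) : ∃ K : ℝ, ∀ x : ℝ, 2 ≤ x →
    ∃ T : ℝ, HasSum (fun n : ℕ => if x < (n : ℝ) then
      Λ n ^ 2 * (n : ℝ) ^ (-a) * Real.log (n / x) ^ b else 0) T ∧
      |T - b.factorial * x ^ (1 - a) * Real.log x / (a - 1) ^ (b + 1)| ≤ K * x ^ (1 - a) := by
  obtain ⟨C, hC, hM⟩ := exists_abs_sum_vonMangoldt_sq_sub_le
  have ha1 : 0 < a - 1 := by linarith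
  set I : ℕ → ℝ := fun b => b.factorial / (a - 1) ^ (b + 1) with hI
  refine ⟨C + C * (a * I b + b * I (b - 1)) + (I b + I (b + 1)), fun x hx => ?_⟩
  have hx0 : 0 < x := by linarith
  set g : ℕ → ℝ → ℝ := fun b t => t ^ (-a) * Real.log (t / x) ^ b with hg
  have hgi (b : ℕ) : IntegrableOn (g b) (Set.Ioi x) := integrableOn_rpow_mul_log_div_pow ha b hx0
  have hgI (b : ℕ) : ∫ t in Set.Ioi x, g b t = I b * x ^ (1 - a) := by
    rw [integral_Ioi_rpow_mul_log_div_pow ha b hx0, hI]; ring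
  have hgc (b : ℕ) : ContinuousOn (g b) (Set.Ici x) :=
    continuousOn_rpow_mul_log_div_pow a b hx0
  have hg0 (b : ℕ) (t : ℝ) (ht : x ≤ t) : 0 ≤ g b t := by
    have ht0 : 0 < t := hx0.trans_le ht
    have hl : 0 ≤ Real.log (t / x) := Real.log_nonneg ((one_le_div hx0).mpr ht)
    simp only [hg]; positivity
  set f' : ℝ → ℝ := fun t => (-a * g b t + b * g (b - 1) t) * t⁻¹ with hf'
  have hder (t : ℝ) (ht : x ≤ t) : HasDerivAt (g b) (f' t) t := by
    have ht0 : 0 < t := hx0.trans_le ht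
    have := (Real.hasDerivAt_rpow_const (p := -a) (Or.inl ht0.ne')).mul
      (hasDerivAt_log_div_pow b hx0 ht0)
    convert! this using 1
    simp only [hf', hg]
    rw [Real.rpow_sub_one ht0.ne']
    field_simp
  have hf'c : ContinuousOn f' (Set.Ici x) :=
    (((hgc b).const_smul (-a)).add ((hgc (b - 1)).const_smul (b : ℝ))).mul
      (continuousOn_id.inv₀ fun t ht => (hx0.trans_le ht).ne')
  set M : ℝ → ℝ := fun t => ∑ n ∈ Finset.Icc 0 ⌊t⌋₊, Λ n ^ 2 with hMd
  set E : ℝ → ℝ := fun t => M t - t * Real.log t with hE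
  have hMm : Measurable M := by
    refine Monotone.measurable fun s t hst => ?_
    exact Finset.sum_le_sum_of_subset_of_nonneg
      (Finset.Icc_subset_Icc le_rfl (Nat.floor_mono hst)) fun _ _ _ => sq_nonneg _
  have hEm : Measurable E := hMm.sub (measurable_id.mul Real.measurable_log)
  have hEb (t : ℝ) (ht : x ≤ t) : |E t| ≤ C * t := hM t (hx.trans ht)
  have hEf (t : ℝ) (ht : x ≤ t) : ‖f' t * E t‖ ≤ C * (a * g b t + b * g (b - 1) t) := by
    have ht0 : 0 < t := hx0.trans_le ht
    have h1 := hg0 b t ht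
    have h2 := hg0 (b - 1) t ht
    have h3 : |(-a * g b t + b * g (b - 1) t)| ≤ a * g b t + b * g (b - 1) t := by
      have h4 : 0 ≤ a * g b t := by positivity
      have h5 : 0 ≤ b * g (b - 1) t := by positivity
      rw [abs_le]; constructor <;> linarith
    rw [norm_mul, Real.norm_eq_abs, Real.norm_eq_abs]
    calc |f' t| * |E t| ≤ ((a * g b t + b * g (b - 1) t) * t⁻¹) * (C * t) := by
          refine mul_le_mul ?_ (hEb t ht) (abs_nonneg _) (by positivity)
          rw [hf', abs_mul, abs_of_pos (inv_pos.mpr ht0)]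
          exact mul_le_mul_of_nonneg_right h3 (by positivity)
      _ = _ := by field_simp
  have hBi : IntegrableOn (fun t => C * (a * g b t + b * g (b - 1) t)) (Set.Ioi x) :=
    (((hgi b).const_mul a).add ((hgi (b - 1)).const_mul (b : ℝ))).const_mul C
  have hEi : IntegrableOn (fun t => f' t * E t) (Set.Ioi x) := by
    refine Integrable.mono' hBi ?_ ?_
    · exact ((hf'c.mono Set.Ioi_subset_Ici_self).aestronglyMeasurable measurableSet_Ioi).mul
        hEm.aestronglyMeasurable
    · exact (ae_restrict_iff' measurableSet_Ioi).mpr (.of_forall fun t ht => hEf t (le_of_lt ht))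
  have hEI : |∫ t in Set.Ioi x, f' t * E t| ≤ C * (a * I b + b * I (b - 1)) * x ^ (1 - a) := by
    have h1 := norm_integral_le_of_norm_le hBi
      ((ae_restrict_iff' measurableSet_Ioi).mpr (.of_forall fun t ht => hEf t (le_of_lt ht)))
    rw [integral_const_mul, integral_add ((hgi b).const_mul a) ((hgi (b - 1)).const_mul (b : ℝ)),
      integral_const_mul, integral_const_mul, hgI, hgI] at h1
    exact h1.trans (le_of_eq (by ring))
  set J : ℝ → ℝ := fun t => (Real.log x + 1) * g b t + g (b + 1) t with hJ
  have hJi : IntegrableOn J (Set.Ioi x) := ((hgi b).const_mul _).add (hgi (b + 1))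
  have hJI : ∫ t in Set.Ioi x, J t =
      (Real.log x + 1) * (I b * x ^ (1 - a)) + I (b + 1) * x ^ (1 - a) := by
    rw [hJ, integral_add ((hgi b).const_mul _) (hgi (b + 1)), integral_const_mul, hgI, hgI]
  have hJe (t : ℝ) (ht : x ≤ t) : J t = g b t * (Real.log t + 1) := by
    have ht0 : 0 < t := hx0.trans_le ht
    simp only [hJ, hg]
    have : Real.log t = Real.log x + Real.log (t / x) := by
      rw [Real.log_div ht0.ne' hx0.ne']; ring
    rw [this]; ring
  have hpart (N : ℕ) (hN : x ≤ N) : ∑ n ∈ Finset.Ioc ⌊x⌋₊ N, g b n * Λ n ^ 2 =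
      g b N * E N - g b x * E x - (∫ t in x..N, f' t * E t) + ∫ t in x..N, J t := by
    have hIcc : Set.Icc x (N : ℝ) ⊆ Set.Ici x := Set.Icc_subset_Ici_self
    have h1 := sum_mul_eq_sub_sub_integral_mul (fun n => Λ n ^ 2) (f := g b) hx0.le hN
      (fun t ht => (hder t ht.1).differentiableAt)
      ((hf'c.mono hIcc).integrableOn_Icc.congr_fun (fun t ht => (hder t ht.1).deriv.symm)
        measurableSet_Icc)
    rw [Nat.floor_natCast] at h1
    have hEii : IntervalIntegrable (fun t => f' t * E t) volume x N :=
      (intervalIntegrable_iff_integrableOn_Ioc_of_le hN).mpr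
        (hEi.mono_set Set.Ioc_subset_Ioi_self)
    have hJii : IntervalIntegrable J volume x N :=
      (intervalIntegrable_iff_integrableOn_Ioc_of_le hN).mpr
        (hJi.mono_set Set.Ioc_subset_Ioi_self)
    have hPd : ∀ t ∈ Set.uIcc x (N : ℝ), HasDerivAt (fun t => g b t * (t * Real.log t))
        (f' t * (t * Real.log t) + g b t * (Real.log t + 1)) t := by
      intro t ht
      rw [Set.uIcc_of_le hN] at ht
      exact (hder t ht.1).mul (Real.hasDerivAt_mul_log (hx0.trans_le ht.1).ne')
    have hPc : ContinuousOn (fun t => f' t * (t * Real.log t) + g b t * (Real.log t + 1))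
        (Set.uIcc x (N : ℝ)) := by
      rw [Set.uIcc_of_le hN]
      have hlc : ContinuousOn Real.log (Set.Icc x (N : ℝ)) :=
        Real.continuousOn_log.mono fun t ht => (hx0.trans_le ht.1).ne'
      exact ((hf'c.mono hIcc).mul (continuousOn_id.mul hlc)).add
        (((hgc b).mono hIcc).mul (hlc.add continuousOn_const))
    have hP := intervalIntegral.integral_eq_sub_of_hasDerivAt hPd hPc.intervalIntegrable
    have h2 : ∫ t in Set.Ioc x (N : ℝ), deriv (g b) t * ∑ k ∈ Finset.Icc 0 ⌊t⌋₊, Λ k ^ 2 =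
        ∫ t in x..N, (f' t * E t + (f' t * (t * Real.log t) + g b t * (Real.log t + 1)) - J t) := by
      rw [intervalIntegral.integral_of_le hN]
      refine setIntegral_congr_fun measurableSet_Ioc fun t ht => ?_
      have ht1 : x ≤ t := ht.1.le
      simp only [(hder t ht1).deriv, hJe t ht1, hE, hMd]
      ring
    rw [intervalIntegral.integral_sub (hEii.add hPc.intervalIntegrable) hJii,
      intervalIntegral.integral_add hEii hPc.intervalIntegrable, hP] at h2
    rw [h1, h2]
    simp only [hE, hMd, Nat.floor_natCast]
    ring
  have hgE : Tendsto (fun N : ℕ => g b N * E N) atTop (nhds 0) := by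
    have hz : Tendsto (fun N : ℕ => C * ((N : ℝ) ^ (1 - a) * Real.log (N / x) ^ b)) atTop
        (nhds 0) := by
      simpa using ((tendsto_rpow_one_sub_mul_log_div_pow ha b hx0).comp
        tendsto_natCast_atTop_atTop).const_mul C
    refine squeeze_zero_norm' ?_ hz
    filter_upwards [eventually_ge_atTop ⌈x⌉₊] with N hN
    have hN' : x ≤ N := Nat.ceil_le.mp hN
    have hN0 : (0 : ℝ) < N := hx0.trans_le hN'
    rw [norm_mul, Real.norm_of_nonneg (hg0 b N hN'), Real.norm_eq_abs]
    calc g b N * |E N| ≤ g b N * (C * N) :=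
          mul_le_mul_of_nonneg_left (hEb N hN') (hg0 b N hN')
      _ = _ := by
        rw [show 1 - a = -a + 1 by ring, Real.rpow_add_one hN0.ne']
        simp only [hg]; ring
  refine ⟨0 - g b x * E x - (∫ t in Set.Ioi x, f' t * E t) + ∫ t in Set.Ioi x, J t, ?_, ?_⟩
  · rw [hasSum_iff_tendsto_nat_of_nonneg, ← tendsto_add_atTop_iff_nat 1]
    · refine Tendsto.congr' ?_ (((hgE.sub_const (g b x * E x)).sub
        (intervalIntegral_tendsto_integral_Ioi x hEi tendsto_natCast_atTop_atTop)).add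
        (intervalIntegral_tendsto_integral_Ioi x hJi tendsto_natCast_atTop_atTop))
      filter_upwards [eventually_ge_atTop ⌈x⌉₊] with N hN
      rw [← hpart N (Nat.ceil_le.mp hN), ← Finset.sum_filter]
      refine Finset.sum_congr ?_ fun n _ => ?_
      · ext n
        simp only [Finset.mem_Ioc, Finset.mem_filter, Finset.mem_range, Nat.floor_lt hx0.le,
          Nat.lt_succ_iff]
        exact and_comm
      · simp only [hg]; ring
    · intro n
      split_ifs with h
      · have hl : 0 ≤ Real.log (n / x) := Real.log_nonneg ((one_le_div hx0).mpr h.le)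
        positivity
      · exact le_rfl
  · rw [hJI]
    have hxE : |g b x * E x| ≤ C * x ^ (1 - a) := by
      have h1 : g b x ≤ x ^ (-a) := by
        simp only [hg, div_self hx0.ne', Real.log_one]
        have : (0 : ℝ) ^ b ≤ 1 := pow_le_one₀ le_rfl zero_le_one
        exact mul_le_of_le_one_right (by positivity) this
      rw [abs_mul, abs_of_nonneg (hg0 b x le_rfl)]
      calc _ ≤ x ^ (-a) * (C * x) :=
            mul_le_mul h1 (hEb x le_rfl) (abs_nonneg _) (by positivity)
        _ = _ := by rw [show 1 - a = -a + 1 by ring, Real.rpow_add_one hx0.ne']; ring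
    have e : b.factorial * x ^ (1 - a) * Real.log x / (a - 1) ^ (b + 1) =
        Real.log x * (I b * x ^ (1 - a)) := by rw [hI]; ring
    have hIp (b : ℕ) : 0 ≤ I b * x ^ (1 - a) := by rw [hI]; positivity
    have p1 := hIp b
    have p2 := hIp (b + 1)
    rw [e]
    have q1 := abs_le.mp hxE
    have q2 := abs_le.mp hEI
    rw [abs_le]
    constructor <;> linarith [q1.1, q1.2, q2.1, q2.2]

theorem vonMangoldt_sq_weighted_tail_asymp (a : ℝ) (ha : 1 < a) (b : ℕ) :
    (fun x : ℝ =>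
        (∑' n : ℕ, if x < (n : ℝ) then (Λ n) ^ 2 * (n : ℝ) ^ (-a) * (Real.log (x / n)) ^ b else 0) -
          (-1 : ℝ) ^ b * (b.factorial : ℝ) * x ^ (1 - a) * Real.log x / (a - 1) ^ (b + 1))
      =O[atTop]
    (fun x : ℝ =>
      ((b.factorial : ℝ) * x ^ (1 - a) * Real.log x / (a - 1) ^ (b + 1)) / Real.log x) := by
  obtain ⟨K, hK⟩ := exists_hasSum_vonMangoldt_sq_tail ha b
  have ha1 : 0 < a - 1 := by linarith
  refine Asymptotics.IsBigO.of_bound (K * ((a - 1) ^ (b + 1) / b.factorial)) ?_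
  filter_upwards [eventually_ge_atTop 2] with x hx
  obtain ⟨T, hT, hb⟩ := hK x hx
  have hx0 : 0 < x := by linarith
  have hl : 0 < Real.log x := Real.log_pos (by linarith)
  have hsum : (∑' n : ℕ, if x < (n : ℝ) then
      (Λ n) ^ 2 * (n : ℝ) ^ (-a) * (Real.log (x / n)) ^ b else 0) = (-1) ^ b * T := by
    rw [← hT.tsum_eq, ← tsum_mul_left]
    refine tsum_congr fun n => ?_
    split_ifs
    · rw [← inv_div, Real.log_inv, neg_pow]; ring
    · simp
  have h1 : (-1 : ℝ) ^ b * T -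
      (-1 : ℝ) ^ b * (b.factorial : ℝ) * x ^ (1 - a) * Real.log x / (a - 1) ^ (b + 1) =
      (-1) ^ b * (T - b.factorial * x ^ (1 - a) * Real.log x / (a - 1) ^ (b + 1)) := by ring
  rw [hsum, h1, norm_mul, norm_pow, norm_neg, norm_one, one_pow, one_mul, Real.norm_eq_abs,
    Real.norm_of_nonneg (by positivity)]
  refine hb.trans (le_of_eq ?_)
  field_simp
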